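/- In dimension 14, every finite set S of points on the unit sphere of EuclideanSpace ℝ (Fin 14) (i.e., ‖x‖ = 1 for all x ∈ S) such that any two distinct points of S are at Euclidean distance at least 1 has cardinality at most 3183; that is, the kissing number in dimension 14 is at most 3183. -/

import Mathlib

/-!
The argument is the semidefinite programming method of Bachoc and Vallentin. For a fixed unit vector
`x`, the projections of the points to the orthogonal complement of `x` and the positivity of
Gegenbauer polynomials give kernels `T(⟪x, y⟫, ⟪x, z⟫, ⟪y, z⟫)` whose sum over all triples of points
is nonnegative; likewise Gegenbauer polynomials of `⟪x, y⟫` give kernels `P` for pairs. For a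
suitable explicit choice of `T` and `P`, the symmetrised `T` is at most a negative constant on
triples of distinct points, and `T` and `P` together are bounded on pairs. Too many points would
then make the sum negative.

The two polynomial inequalities are proved by subdivision. With `(1 - 2 * u, 2 + 2 * u)` as
homogeneous coordinates for a cosine `u`, a polynomial in the cosines becomes a form, and it is
nonnegative where these coordinates are if its coefficients are. On a cell where this fails for
the form, one can subdivide the cell, or show by the same test that the Gram determinant of three
points would be negative there. All coefficients of a form, increased by a multiple of the
coefficients of a power of `3`, are packed into one natural number, so that a subdivision takes few
arithmetic operations.
-/

namespace KissingBound

/-! ### Forms with natural coefficients -/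

section Summand

open MvPolynomial

variable {R : Type*} [CommSemiring R]

/-- The algebraic preorder of a semiring. For polynomials with coefficients in `ℕ` it is the
coefficientwise order. -/
def IsSummand (p q : R) : Prop := ∃ r, p + r = q

theorem IsSummand.refl (p : R) : IsSummand p p := ⟨0, add_zero p⟩

theorem IsSummand.trans {p q r : R} (hpq : IsSummand p q) (hqr : IsSummand q r) :
    IsSummand p r := by
  obtain ⟨s, rfl⟩ := hpq
  obtain ⟨t, rfl⟩ := hqr
  exact ⟨s + t, (add_assoc p s t).symm⟩

theorem IsSummand.add {p q p' q' : R} (h : IsSummand p q) (h' : IsSummand p' q') :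
    IsSummand (p + p') (q + q') := by
  obtain ⟨r, rfl⟩ := h
  obtain ⟨r', rfl⟩ := h'
  exact ⟨r + r', add_add_add_comm p p' r r'⟩

theorem IsSummand.mul {p q p' q' : R} (h : IsSummand p q) (h' : IsSummand p' q') :
    IsSummand (p * p') (q * q') := by
  obtain ⟨r, rfl⟩ := h
  obtain ⟨r', rfl⟩ := h'
  exact ⟨p * r' + r * p' + r * r', by ring⟩

theorem IsSummand.coeff_le {σ : Type*} {p q : MvPolynomial σ ℕ} (h : IsSummand p q) (m : σ →₀ ℕ) :
    p.coeff m ≤ q.coeff m := by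
  obtain ⟨r, rfl⟩ := h
  exact (coeff_add m p r).symm ▸ Nat.le_add_right _ _

theorem isSummand_natCast {k l : ℕ} (h : k ≤ l) : IsSummand (k : R) (l : R) :=
  ⟨(l - k : ℕ), by rw [← Nat.cast_add, Nat.add_sub_cancel' h]⟩

theorem isSummand_aeval {σ : Type*} [Algebra ℕ R] {f g : σ → R} (h : ∀ i, IsSummand (f i) (g i))
    (p : MvPolynomial σ ℕ) : IsSummand (aeval f p) (aeval g p) := by
  induction p using MvPolynomial.induction_on with
  | C k => simpa only [algHom_C] using IsSummand.refl _
  | add p q hp hq => simpa only [map_add] using hp.add hq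
  | mul_X p i hp => simpa only [map_mul, aeval_X] using hp.mul (h i)

end Summand

section Bernstein

variable {A n : ℕ} {R : Type*} [CommSemiring R]

/-- `∏ₐ zₐ ^ (n - eₐ) xₐ ^ eₐ`. -/
def bernsteinMonomial (z x : Fin A → R) (e : Fin A → Fin (n + 1)) : R :=
  ∏ a, z a ^ (n - e a : ℕ) * x a ^ (e a : ℕ)

/-- The form of degree `n` in each pair `(zₐ, xₐ)` with coefficients `c`. -/
def bernsteinEval (c : (Fin A → Fin (n + 1)) → ℕ) (z x : Fin A → R) : R :=
  ∑ e, c e * bernsteinMonomial z x e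

/-- The coefficients of `∏ₐ (zₐ + xₐ) ^ n`. -/
def binomials (e : Fin A → Fin (n + 1)) : ℕ := ∏ a, n.choose (e a)

theorem bernsteinEval_binomials (z x : Fin A → R) :
    bernsteinEval (n := n) binomials z x = ∏ a, (z a + x a) ^ n := by
  have expand (a : Fin A) : (z a + x a) ^ n
      = ∑ j : Fin (n + 1), (n.choose j : R) * (z a ^ (n - j : ℕ) * x a ^ (j : ℕ)) := by
    rw [add_comm, add_pow, ← Fin.sum_univ_eq_sum_range
      fun j => x a ^ j * z a ^ (n - j) * (n.choose j : R)]
    exact Finset.sum_congr rfl fun j _ => by ring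
  simp only [expand, Finset.prod_univ_sum, Fintype.piFinset_univ, bernsteinEval, binomials,
    bernsteinMonomial, Nat.cast_prod, Finset.prod_mul_distrib]

theorem binomials_le (e : Fin A → Fin (n + 1)) : binomials e ≤ 2 ^ (n * A) := by
  calc binomials e ≤ ∏ _a : Fin A, 2 ^ n := Finset.prod_le_prod' fun a _ => Nat.choose_le_two_pow ..
    _ = 2 ^ (n * A) := by rw [Finset.prod_const, Finset.card_univ, Fintype.card_fin, pow_mul]

theorem bernsteinEval_mul_left (k : ℕ) (c : (Fin A → Fin (n + 1)) → ℕ) (z x : Fin A → R) :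
    bernsteinEval (fun e => k * c e) z x = k * bernsteinEval c z x := by
  simp only [bernsteinEval, Finset.mul_sum, Nat.cast_mul, mul_assoc]

theorem map_bernsteinEval {R' : Type*} [CommSemiring R'] (φ : R →+* R')
    (c : (Fin A → Fin (n + 1)) → ℕ) (z x : Fin A → R) :
    φ (bernsteinEval c z x) = bernsteinEval c (φ ∘ z) (φ ∘ x) := by
  simp [bernsteinEval, bernsteinMonomial]

theorem bernsteinMonomial_nonneg {z x : Fin A → ℝ} (hz : ∀ a, 0 ≤ z a) (hx : ∀ a, 0 ≤ x a)
    (e : Fin A → Fin (n + 1)) : 0 ≤ bernsteinMonomial z x e :=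
  Finset.prod_nonneg fun a _ => mul_nonneg (pow_nonneg (hz a) _) (pow_nonneg (hx a) _)

theorem bernsteinEval_mono {c c' : (Fin A → Fin (n + 1)) → ℕ} (h : ∀ e, c e ≤ c' e)
    {z x : Fin A → ℝ} (hz : ∀ a, 0 ≤ z a) (hx : ∀ a, 0 ≤ x a) :
    bernsteinEval c z x ≤ bernsteinEval c' z x :=
  Finset.sum_le_sum fun e _ => mul_le_mul_of_nonneg_right (Nat.cast_le.2 (h e))
    (bernsteinMonomial_nonneg hz hx e)

theorem bernsteinMonomial_update (z x : Fin A → R) (a : Fin A) (s t : R)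
    (e : Fin A → Fin (n + 1)) :
    bernsteinMonomial (Function.update z a s) (Function.update x a t) e
      = s ^ (n - e a : ℕ) * t ^ (e a : ℕ)
        * ∏ b ∈ Finset.univ.erase a, z b ^ (n - e b : ℕ) * x b ^ (e b : ℕ) := by
  rw [bernsteinMonomial, ← Finset.mul_prod_erase _ _ (Finset.mem_univ a)]
  simp only [Function.update_self]
  congr 1
  refine Finset.prod_congr rfl fun b hb => ?_
  rw [Function.update_of_ne (Finset.ne_of_mem_erase hb),
    Function.update_of_ne (Finset.ne_of_mem_erase hb)]

theorem bernsteinEval_update_mul (c : (Fin A → Fin (n + 1)) → ℕ) (z x : Fin A → R) (a : Fin A)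
    (k : R) :
    bernsteinEval c (Function.update z a (k * z a)) (Function.update x a (k * x a))
      = k ^ n * bernsteinEval c z x := by
  rw [bernsteinEval, bernsteinEval, Finset.mul_sum]
  refine Finset.sum_congr rfl fun e _ => ?_
  have split := bernsteinMonomial_update z x a (z a) (x a) e
  rw [Function.update_eq_self, Function.update_eq_self] at split
  have degree : k ^ n = k ^ (n - e a : ℕ) * k ^ (e a : ℕ) := by
    rw [← pow_add, Nat.sub_add_cancel (Nat.le_of_lt_succ (e a).2)]
  rw [bernsteinMonomial_update, split, degree]
  ring

end Bernstein

section Polynomial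

open MvPolynomial

variable {A n : ℕ}

/-- Exponents of `bernsteinMonomial`, the variables `zₐ` and `xₐ` being `inl a` and `inr a`. -/
noncomputable def bernsteinExponent (e : Fin A → Fin (n + 1)) : Fin A ⊕ Fin A →₀ ℕ :=
  Finsupp.equivFunOnFinite.symm (Sum.elim (fun a => n - e a) fun a => e a)

theorem bernsteinExponent_injective :
    Function.Injective (bernsteinExponent : (Fin A → Fin (n + 1)) → Fin A ⊕ Fin A →₀ ℕ) := by
  intro e e' h
  funext a
  exact Fin.ext (by simpa [bernsteinExponent] using DFunLike.congr_fun h (Sum.inr a))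

/-- The generic form with coefficients `c`, as a polynomial. -/
noncomputable def bernsteinForm (c : (Fin A → Fin (n + 1)) → ℕ) : MvPolynomial (Fin A ⊕ Fin A) ℕ :=
  bernsteinEval c (fun a => X (Sum.inl a)) fun a => X (Sum.inr a)

theorem aeval_bernsteinForm {R : Type*} [CommSemiring R] (c : (Fin A → Fin (n + 1)) → ℕ)
    (f : Fin A ⊕ Fin A → R) :
    aeval f (bernsteinForm c) = bernsteinEval c (f ∘ Sum.inl) (f ∘ Sum.inr) := by
  have := map_bernsteinEval (aeval f : MvPolynomial (Fin A ⊕ Fin A) ℕ →ₐ[ℕ] R).toRingHom c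
    (fun a => X (Sum.inl a)) fun a => X (Sum.inr a)
  simpa [bernsteinForm, Function.comp_def] using this

theorem bernsteinForm_eq_sum_monomial (c : (Fin A → Fin (n + 1)) → ℕ) :
    bernsteinForm c = ∑ e, monomial (bernsteinExponent e) (c e) := by
  refine Finset.sum_congr rfl fun e _ => ?_
  rw [monomial_eq, Finsupp.prod_fintype _ _ fun _ => pow_zero _, Fintype.prod_sum_type,
    ← Finset.prod_mul_distrib, eq_natCast]
  rfl

theorem coeff_bernsteinForm (c : (Fin A → Fin (n + 1)) → ℕ) (e : Fin A → Fin (n + 1)) :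
    (bernsteinForm c).coeff (bernsteinExponent e) = c e := by
  classical
  simp [bernsteinForm_eq_sum_monomial, coeff_sum, coeff_monomial,
    bernsteinExponent_injective.eq_iff]

theorem coeff_bernsteinForm_of_notMem_range (c : (Fin A → Fin (n + 1)) → ℕ)
    {m : Fin A ⊕ Fin A →₀ ℕ} (hm : m ∉ Set.range (bernsteinExponent (n := n))) :
    (bernsteinForm c).coeff m = 0 := by
  classical
  rw [bernsteinForm_eq_sum_monomial, coeff_sum]
  exact Finset.sum_eq_zero fun e _ => by
    rw [coeff_monomial, if_neg fun h => hm ⟨e, h⟩]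

theorem IsSummand.exists_eq_bernsteinForm {c : (Fin A → Fin (n + 1)) → ℕ}
    {p : MvPolynomial (Fin A ⊕ Fin A) ℕ} (h : IsSummand p (bernsteinForm c)) :
    ∃ d : (Fin A → Fin (n + 1)) → ℕ, (∀ e, d e ≤ c e) ∧ p = bernsteinForm d := by
  refine ⟨fun e => p.coeff (bernsteinExponent e), fun e => ?_, ?_⟩
  · exact (h.coeff_le _).trans_eq (coeff_bernsteinForm c e)
  · ext m
    by_cases hm : m ∈ Set.range (bernsteinExponent (n := n))
    · obtain ⟨e, rfl⟩ := hm
      rw [coeff_bernsteinForm]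
    · have := h.coeff_le m
      rw [coeff_bernsteinForm_of_notMem_range c hm] at this
      rw [coeff_bernsteinForm_of_notMem_range _ hm, Nat.le_zero.1 this]

theorem bernsteinForm_binomials :
    bernsteinForm (binomials (A := A) (n := n)) = ∏ a, (X (Sum.inl a) + X (Sum.inr a)) ^ n :=
  bernsteinEval_binomials _ _

end Polynomial

section Substitution

open MvPolynomial

variable {A n : ℕ}

theorem isSummand_bernsteinEval {R : Type*} [CommSemiring R] {c d : (Fin A → Fin (n + 1)) → ℕ}
    (h : ∀ e, c e ≤ d e) (z x : Fin A → R) :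
    IsSummand (bernsteinEval c z x) (bernsteinEval d z x) := by
  refine ⟨bernsteinEval (fun e => d e - c e) z x, ?_⟩
  rw [bernsteinEval, bernsteinEval, bernsteinEval, ← Finset.sum_add_distrib]
  refine Finset.sum_congr rfl fun e _ => ?_
  rw [← add_mul, ← Nat.cast_add, Nat.add_sub_cancel' (h e)]

theorem prod_update_add_pow {R : Type*} [CommSemiring R] (a : Fin A) {k α β γ δ : ℕ}
    (hz : α + γ = k) (hx : β + δ = k) (z x : Fin A → R) :
    ∏ b, (Function.update z a (α * z a + β * x a) b + Function.update x a (γ * z a + δ * x a) b) ^ n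
      = k ^ n * ∏ b, (z b + x b) ^ n := by
  have at_axis : α * z a + β * x a + (γ * z a + δ * x a) = k * (z a + x a) := by
    calc α * z a + β * x a + (γ * z a + δ * x a)
        = ((α + γ : ℕ) : R) * z a + ((β + δ : ℕ) : R) * x a := by push_cast; ring
      _ = k * (z a + x a) := by rw [hz, hx, mul_add]
  rw [← Finset.mul_prod_erase _ _ (Finset.mem_univ a),
    ← Finset.mul_prod_erase Finset.univ (fun b => (z b + x b) ^ n) (Finset.mem_univ a),
    Function.update_self, Function.update_self, at_axis, mul_pow, mul_assoc]
  congr 2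
  refine Finset.prod_congr rfl fun b hb => ?_
  rw [Function.update_of_ne (Finset.ne_of_mem_erase hb),
    Function.update_of_ne (Finset.ne_of_mem_erase hb)]

theorem exists_bernsteinEval_update {c : (Fin A → Fin (n + 1)) → ℕ} {M : ℕ}
    (hc : ∀ e, c e ≤ M * binomials e) (a : Fin A) {k α β γ δ : ℕ} (hz : α + γ = k)
    (hx : β + δ = k) :
    ∃ d : (Fin A → Fin (n + 1)) → ℕ, (∀ e, d e ≤ k ^ n * M * binomials e) ∧
      ∀ (R : Type) [CommSemiring R] (z x : Fin A → R),
        bernsteinEval d z x = bernsteinEval c (Function.update z a (α * z a + β * x a))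
          (Function.update x a (γ * z a + δ * x a)) := by
  let Z : Fin A → MvPolynomial (Fin A ⊕ Fin A) ℕ := fun b => X (Sum.inl b)
  let Y : Fin A → MvPolynomial (Fin A ⊕ Fin A) ℕ := fun b => X (Sum.inr b)
  let Z' := Function.update Z a (α * Z a + β * Y a)
  let Y' := Function.update Y a (γ * Z a + δ * Y a)
  have bound : IsSummand (bernsteinEval c Z' Y')
      (bernsteinForm fun e => k ^ n * M * binomials (n := n) e) := by
    have := isSummand_bernsteinEval hc Z' Y'
    rw [bernsteinEval_mul_left, bernsteinEval_binomials, prod_update_add_pow a hz hx] at this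
    rw [bernsteinForm, bernsteinEval_mul_left, bernsteinEval_binomials]
    convert this using 1
    push_cast
    ring
  obtain ⟨d, hd, hcd⟩ := bound.exists_eq_bernsteinForm
  refine ⟨d, hd, fun R _ z x => ?_⟩
  let φ : MvPolynomial (Fin A ⊕ Fin A) ℕ →ₐ[ℕ] R := aeval (Sum.elim z x)
  have hZ : φ ∘ Z' = Function.update z a (α * z a + β * x a) :=
    (Function.comp_update ..).trans (by simp [φ, Z, Y, Function.comp_def])
  have hY : φ ∘ Y' = Function.update x a (γ * z a + δ * x a) :=
    (Function.comp_update ..).trans (by simp [φ, Z, Y, Function.comp_def])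
  rw [← hZ, ← hY]
  exact (aeval_bernsteinForm d (Sum.elim z x)).symm.trans
    ((congrArg φ hcd.symm).trans (map_bernsteinEval φ.toRingHom c Z' Y'))

end Substitution

section Sign

open MvPolynomial

theorem exists_even_odd_parts {R : Type*} [CommSemiring R] (F : Polynomial R) :
    ∃ p q : R, F.eval 1 = p + q ∧
      ∀ (S : Type) [CommRing S] (φ : R →+* S), F.eval₂ φ (-1) = φ p - φ q := by
  induction F using Polynomial.induction_on' with
  | add F G hF hG =>
    obtain ⟨p, q, hF₁, hF⟩ := hF
    obtain ⟨p', q', hG₁, hG⟩ := hG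
    refine ⟨p + p', q + q', ?_, fun S _ φ => ?_⟩
    · rw [Polynomial.eval_add, hF₁, hG₁, add_add_add_comm]
    · rw [Polynomial.eval₂_add, hF, hG, map_add, map_add, add_sub_add_comm]
  | monomial k r =>
    rcases Nat.even_or_odd k with hk | hk
    · exact ⟨r, 0, by simp, fun S _ φ => by simp [hk.neg_one_pow]⟩
    · exact ⟨0, r, by simp, fun S _ φ => by simp [hk.neg_one_pow]⟩

variable {A n : ℕ}

theorem exists_bernsteinEval_eq_sub {F : Polynomial (MvPolynomial (Fin A ⊕ Fin A) ℕ)} {K : ℕ}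
    (hF : IsSummand (F.eval 1) (bernsteinForm fun e => K * binomials (n := n) e)) :
    ∃ c : (Fin A → Fin (n + 1)) → ℕ, (∀ e, c e ≤ 2 * K * binomials e) ∧
      ∀ (R : Type) [CommRing R] (z x : Fin A → R), bernsteinEval c z x
        = K * ∏ a, (z a + x a) ^ n
          - F.eval₂ (aeval (Sum.elim z x) : _ →ₐ[ℕ] R).toRingHom (-1) := by
  obtain ⟨p, q, hpq, hsub⟩ := exists_even_odd_parts F
  obtain ⟨r, hr⟩ := hF
  have hsummand : IsSummand (q + r + q) (bernsteinForm fun e => 2 * K * binomials (n := n) e) := by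
    refine ⟨p + p + r, ?_⟩
    simp only [mul_assoc 2 K]
    rw [bernsteinForm, bernsteinEval_mul_left, ← bernsteinForm, ← hr, hpq, Nat.cast_two]
    ring
  obtain ⟨c, hc, hqrc⟩ := hsummand.exists_eq_bernsteinForm
  refine ⟨c, hc, fun R _ z x => ?_⟩
  have hcomplement := congrArg (aeval (Sum.elim z x) : _ →ₐ[ℕ] R) hr
  have hvalue := congrArg (aeval (Sum.elim z x) : _ →ₐ[ℕ] R) hqrc
  simp only [hpq, map_add, aeval_bernsteinForm, bernsteinEval_mul_left, bernsteinEval_binomials,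
    Sum.elim_comp_inl, Sum.elim_comp_inr] at hcomplement hvalue
  rw [← hvalue, ← hcomplement, hsub]
  simp only [AlgHom.toRingHom_eq_coe, RingHom.coe_coe]
  ring

end Sign

/-! ### Packed coefficients -/

section Radix

variable {b N : ℕ}

/-- The natural number with digits `d` in radix `2 ^ b`, least significant digit first. -/
def ofRadixDigits (b : ℕ) (d : Fin N → ℕ) : ℕ := ∑ k, d k * (2 ^ b) ^ (k : ℕ)

theorem ofRadixDigits_succ (d : Fin (N + 1) → ℕ) :
    ofRadixDigits b d = 2 ^ b * ofRadixDigits b (fun k => d k.succ) + d 0 := by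
  rw [ofRadixDigits, Fin.sum_univ_succ, ofRadixDigits, Finset.mul_sum, add_comm]
  simp only [Fin.val_zero, Fin.val_succ, pow_zero, mul_one, pow_succ]
  congr 1
  exact Finset.sum_congr rfl fun k _ => by ring

theorem two_pow_mul_add_land {x y r s : ℕ} (hr : r < 2 ^ b) (hs : s < 2 ^ b) :
    (2 ^ b * x + r) &&& (2 ^ b * y + s) = 2 ^ b * (x &&& y) + (r &&& s) := by
  refine Nat.eq_of_testBit_eq fun i => ?_
  rw [Nat.testBit_and, Nat.testBit_two_pow_mul_add _ hr, Nat.testBit_two_pow_mul_add _ hs,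
    Nat.testBit_two_pow_mul_add _ (Nat.and_lt_two_pow r hs)]
  split <;> rw [Nat.testBit_and]

theorem ofRadixDigits_land {d d' : Fin N → ℕ} (hd : ∀ k, d k < 2 ^ b) (hd' : ∀ k, d' k < 2 ^ b) :
    ofRadixDigits b d &&& ofRadixDigits b d' = ofRadixDigits b fun k => d k &&& d' k := by
  induction N with
  | zero => simp [ofRadixDigits]
  | succ N ih =>
    simp only [ofRadixDigits_succ]
    rw [two_pow_mul_add_land (hd 0) (hd' 0), ih (fun k => hd _) fun k => hd' _]

theorem ofRadixDigits_injOn {d d' : Fin N → ℕ} (hd : ∀ k, d k < 2 ^ b) (hd' : ∀ k, d' k < 2 ^ b)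
    (h : ofRadixDigits b d = ofRadixDigits b d') : d = d' := by
  induction N with
  | zero => exact Subsingleton.elim d d'
  | succ N ih =>
    rw [ofRadixDigits_succ, ofRadixDigits_succ] at h
    have first : d 0 = d' 0 := by
      have := congrArg (· % 2 ^ b) h
      simpa only [Nat.mul_add_mod, Nat.mod_eq_of_lt (hd 0), Nat.mod_eq_of_lt (hd' 0)] using this
    rw [first, Nat.add_right_cancel_iff] at h
    have rest := ih (fun k => hd _) (fun k => hd' _) (Nat.eq_of_mul_eq_mul_left (by positivity) h)
    exact funext (Fin.cases first (congrFun rest))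

end Radix

section Packing

variable {A b n : ℕ}

/-- Bit distance of consecutive powers of the variable `a` in `packed`. -/
def stride (b n a : ℕ) : ℕ := b * (n + 1) ^ a

/-- The coefficients `c` as the digits of one natural number in radix `2 ^ b`: Kronecker
substitution in the form with coefficients `c`. -/
def packed (b : ℕ) (c : (Fin A → Fin (n + 1)) → ℕ) : ℕ :=
  bernsteinEval c (fun _ => 1) fun a => 2 ^ stride b n a

theorem packed_eq_ofRadixDigits (c : (Fin A → Fin (n + 1)) → ℕ) :
    packed b c = ofRadixDigits b fun k => c (finFunctionFinEquiv.symm k) := by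
  rw [packed, bernsteinEval, ofRadixDigits, ← Equiv.sum_comp finFunctionFinEquiv]
  refine Finset.sum_congr rfl fun e _ => ?_
  rw [Equiv.symm_apply_apply, finFunctionFinEquiv_apply, ← Finset.prod_pow_eq_pow_sum]
  simp only [bernsteinMonomial, stride, one_pow, one_mul, Nat.cast_id, ← pow_mul]
  simp only [mul_comm, mul_left_comm]

theorem packed_land {c d : (Fin A → Fin (n + 1)) → ℕ} (hc : ∀ e, c e < 2 ^ b)
    (hd : ∀ e, d e < 2 ^ b) : packed b c &&& packed b d = packed b fun e => c e &&& d e := by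
  simp only [packed_eq_ofRadixDigits]
  exact ofRadixDigits_land (fun k => hc _) fun k => hd _

theorem packed_injOn {c d : (Fin A → Fin (n + 1)) → ℕ} (hc : ∀ e, c e < 2 ^ b)
    (hd : ∀ e, d e < 2 ^ b) (h : packed b c = packed b d) : c = d := by
  simp only [packed_eq_ofRadixDigits] at h
  have := ofRadixDigits_injOn (fun k => hc _) (fun k => hd _) h
  exact funext fun e => by simpa using congrFun this (finFunctionFinEquiv e)

theorem packed_add (c d : (Fin A → Fin (n + 1)) → ℕ) :
    packed b (fun e => c e + d e) = packed b c + packed b d := by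
  simp only [packed, bernsteinEval, ← Finset.sum_add_distrib, Nat.cast_add, add_mul]

theorem packed_mul_left (k : ℕ) (c : (Fin A → Fin (n + 1)) → ℕ) :
    packed b (fun e => k * c e) = k * packed b c :=
  bernsteinEval_mul_left k c _ _

theorem packed_prod (m : Fin A → Fin (n + 1) → ℕ) :
    packed b (fun e => ∏ a, m a (e a))
      = ∏ a : Fin A, ∑ j : Fin (n + 1), m a j * 2 ^ (stride b n a * j) := by
  simp only [Finset.prod_univ_sum, Fintype.piFinset_univ, packed, bernsteinEval,
    bernsteinMonomial, Finset.prod_mul_distrib, one_pow, one_mul, Nat.cast_id, pow_mul]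

/-- All digits equal to `1`. -/
def packedOnes (A b n : ℕ) : ℕ := ∏ a : Fin A, ∑ j : Fin (n + 1), 2 ^ (stride b n a * j)

theorem packed_const (k : ℕ) :
    packed b (fun _ : Fin A → Fin (n + 1) => k) = k * packedOnes A b n := by
  have := packed_prod (b := b) (fun (_ : Fin A) (_ : Fin (n + 1)) => 1)
  simp only [Finset.prod_const_one, one_mul] at this
  rw [packedOnes, ← this, ← packed_mul_left, mul_one]

/-- The digits of `∏ₐ (zₐ + xₐ) ^ n`. -/
def packedBinomials (A b n : ℕ) : ℕ := ∏ a : Fin A, (1 + 2 ^ stride b n a) ^ n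

theorem packed_binomials : packed b (binomials (A := A) (n := n)) = packedBinomials A b n :=
  bernsteinEval_binomials _ _

end Packing

section Digits

variable (A b n : ℕ)

/-- Divides every digit by `2 ^ n`, rounding down. -/
def floorDigits (W : ℕ) : ℕ := (W &&& ((2 ^ b - 2 ^ n) * packedOnes A b n)) >>> n

/-- Whether every digit is at least `k` times the corresponding product of binomial coefficients:
the top bits of the digits collect the carries. -/
def digitsGE (W k : ℕ) : Bool :=
  (W + 2 ^ (b - 1) * packedOnes A b n - k * packedBinomials A b n)
    &&& (2 ^ (b - 1) * packedOnes A b n) == 2 ^ (b - 1) * packedOnes A b n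

variable {A b n}

theorem land_two_pow_sub_two_pow (hn : n ≤ b) {k : ℕ} (hk : k < 2 ^ b) :
    k &&& (2 ^ b - 2 ^ n) = 2 ^ n * (k / 2 ^ n) := by
  have mask : 2 ^ b - 2 ^ n = 2 ^ n * (2 ^ (b - n) - 1) + 0 := by
    rw [Nat.mul_sub, ← pow_add, Nat.add_sub_cancel' hn, mul_one, add_zero]
  have quotient : k / 2 ^ n < 2 ^ (b - n) := by
    rw [Nat.div_lt_iff_lt_mul (by positivity), ← pow_add, Nat.sub_add_cancel hn]
    exact hk
  conv_lhs => rw [← Nat.div_add_mod k (2 ^ n), mask]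
  rw [two_pow_mul_add_land (Nat.mod_lt _ (by positivity)) (by positivity), Nat.and_zero, add_zero,
    Nat.and_two_pow_sub_one_of_lt_two_pow quotient]

theorem floorDigits_packed (hn : n ≤ b) {c : (Fin A → Fin (n + 1)) → ℕ} (hc : ∀ e, c e < 2 ^ b) :
    floorDigits A b n (packed b c) = packed b fun e => c e / 2 ^ n := by
  have mask : 2 ^ b - 2 ^ n < 2 ^ b := Nat.sub_lt (by positivity) (by positivity)
  rw [floorDigits, ← packed_const, packed_land hc fun _ => mask]
  simp only [land_two_pow_sub_two_pow hn (hc _)]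
  rw [packed_mul_left, Nat.shiftRight_eq_div_pow, Nat.mul_div_cancel_left _ (by positivity)]

theorem le_of_digitsGE {k : ℕ} {c : (Fin A → Fin (n + 1)) → ℕ}
    (hc : ∀ e, c e < 2 ^ (b - 1)) (hk : k * 2 ^ (n * A) ≤ 2 ^ (b - 1)) (hb : 1 ≤ b)
    (h : digitsGE A b n (packed b c) k) (e : Fin A → Fin (n + 1)) : k * binomials e ≤ c e := by
  have hbit : 2 ^ (b - 1) + 2 ^ (b - 1) = 2 ^ b := by
    rw [← two_mul, ← pow_succ', Nat.sub_add_cancel hb]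
  have hbinom (e : Fin A → Fin (n + 1)) : k * binomials e ≤ 2 ^ (b - 1) :=
    (Nat.mul_le_mul_left k (binomials_le e)).trans hk
  let d : (Fin A → Fin (n + 1)) → ℕ := fun e => c e + 2 ^ (b - 1) - k * binomials e
  have hd (e : Fin A → Fin (n + 1)) : d e < 2 ^ b :=
    (Nat.sub_le _ _).trans_lt (hbit ▸ Nat.add_lt_add_right (hc e) _)
  have difference : packed b c + 2 ^ (b - 1) * packedOnes A b n - k * packedBinomials A b n
      = packed b d := by
    refine Nat.sub_eq_of_eq_add ?_
    rw [← packed_const, ← packed_binomials, ← packed_mul_left, ← packed_add, ← packed_add]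
    exact congrArg _ (funext fun e =>
      (Nat.sub_add_cancel ((hbinom e).trans (Nat.le_add_left _ _))).symm)
  have top : 2 ^ (b - 1) < 2 ^ b := Nat.pow_lt_pow_right one_lt_two (Nat.sub_lt hb one_pos)
  rw [digitsGE, difference, beq_iff_eq, ← packed_const, packed_land hd fun _ => top] at h
  have carry := congrFun (packed_injOn (fun e => Nat.and_lt_two_pow _ top) (fun _ => top) h) e
  have : 2 ^ (b - 1) ≤ d e := carry ▸ Nat.and_le_left
  have := hbinom e
  simp only [d] at *
  omega

end Digits

section Slices

variable {A n : ℕ} {R : Type*} [CommSemiring R]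

/-- The coefficients of the terms of degree `i` in the variable `xₐ`. -/
def sliceCoeff (a : Fin A) (i : ℕ) (c : (Fin A → Fin (n + 1)) → ℕ) (e : Fin A → Fin (n + 1)) : ℕ :=
  if e a = i then c e else 0

theorem sum_bernsteinEval_sliceCoeff (a : Fin A) (c : (Fin A → Fin (n + 1)) → ℕ)
    (z x : Fin A → R) :
    ∑ i ∈ Finset.range (n + 1), bernsteinEval (sliceCoeff a i c) z x = bernsteinEval c z x := by
  simp only [bernsteinEval, sliceCoeff]
  rw [Finset.sum_comm]
  refine Finset.sum_congr rfl fun e _ => ?_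
  rw [Finset.sum_eq_single (e a : ℕ) (fun i _ hi => by rw [if_neg hi.symm, Nat.cast_zero, zero_mul])
    fun h => absurd (Finset.mem_range.2 (e a).2) h, if_pos rfl]

theorem bernsteinEval_sliceCoeff_update (a : Fin A) (i : ℕ) (c : (Fin A → Fin (n + 1)) → ℕ)
    (z x : Fin A → R) (s t : R) :
    bernsteinEval (sliceCoeff a i c) (Function.update z a s) (Function.update x a t)
      = s ^ (n - i) * t ^ i
        * bernsteinEval (sliceCoeff a i c) (Function.update z a 1) (Function.update x a 1) := by
  rw [bernsteinEval, bernsteinEval, Finset.mul_sum]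
  refine Finset.sum_congr rfl fun e _ => ?_
  rw [bernsteinMonomial_update, bernsteinMonomial_update, one_pow, one_pow, sliceCoeff]
  split
  case isTrue h => rw [h]; ring
  case isFalse => rw [Nat.cast_zero, zero_mul, zero_mul, mul_zero]

end Slices

section Halves

variable (A b n : ℕ)

/-- The digits of the terms of degree `i` in the variable `xₐ`. -/
def slice (a : Fin A) (i W : ℕ) : ℕ :=
  W &&& ((2 ^ b - 1) * ∏ c : Fin A,
    if c = a then 2 ^ (stride b n a * i) else ∑ j : Fin (n + 1), 2 ^ (stride b n c * j))

/-- `∑ i ≤ n, u ^ (n - i) * f i` by Horner's rule. -/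
def horner (u : ℕ) (f : ℕ → ℕ) (n : ℕ) : ℕ := Nat.rec (f 0) (fun i r => r * u + f (i + 1)) n

/-- The effect on packed coefficients of substituting `2 zₐ + xₐ` for `zₐ`, which restricts the
form to the lower half of the interval of `xₐ`. -/
def leftHalf (a : Fin A) (W : ℕ) : ℕ :=
  horner (2 + 2 ^ stride b n a) (fun i => slice A b n a i W) n

/-- The effect on packed coefficients of substituting `zₐ + 2 xₐ` for `xₐ`, which restricts the
form to the upper half of the interval of `xₐ`. -/
def rightHalf (a : Fin A) (W : ℕ) : ℕ :=
  horner (1 + 2 ^ (stride b n a + 1))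
    (fun i => slice A b n a (n - i) W >>> (stride b n a * (n - i))) n

variable {A b n}

theorem horner_eq_sum (u : ℕ) (f : ℕ → ℕ) :
    horner u f n = ∑ i ∈ Finset.range (n + 1), u ^ (n - i) * f i := by
  induction n with
  | zero => simp [horner]
  | succ n ih =>
    change horner u f n * u + f (n + 1) = _
    rw [ih, Finset.sum_range_succ _ (n + 1), Nat.sub_self, pow_zero, one_mul, Finset.sum_mul]
    congr 1
    refine Finset.sum_congr rfl fun i hi => ?_
    rw [Nat.sub_add_comm (Nat.le_of_lt_succ (Finset.mem_range.1 hi)), pow_succ, mul_right_comm]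

theorem slice_packed (a : Fin A) {i : ℕ} (hi : i ≤ n) {c : (Fin A → Fin (n + 1)) → ℕ}
    (hc : ∀ e, c e < 2 ^ b) : slice A b n a i (packed b c) = packed b (sliceCoeff a i c) := by
  let m (c : Fin A) (j : Fin (n + 1)) : ℕ := if c = a then if j = i then 1 else 0 else 1
  have indicator (e : Fin A → Fin (n + 1)) : ∏ c, m c (e c) = if e a = i then 1 else 0 := by
    rw [Finset.prod_eq_single a (fun c _ h => if_neg h) (by simp)]
    exact if_pos rfl
  have factor (c : Fin A) : ∑ j : Fin (n + 1), m c j * 2 ^ (stride b n c * j)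
      = if c = a then 2 ^ (stride b n a * i) else ∑ j : Fin (n + 1), 2 ^ (stride b n c * j) := by
    by_cases h : c = a
    · rw [if_pos h, Finset.sum_eq_single ⟨i, Nat.lt_succ_of_le hi⟩] <;>
        simp +contextual [m, h, Fin.ext_iff]
    · simp [m, h]
  have mask (e : Fin A → Fin (n + 1)) :
      (2 ^ b - 1) * ∏ c, m c (e c) = if e a = i then 2 ^ b - 1 else 0 := by
    rw [indicator, mul_ite, mul_one, mul_zero]
  have hpos : 0 < 2 ^ b := by positivity
  rw [slice, ← Finset.prod_congr rfl fun c _ => factor c, ← packed_prod, ← packed_mul_left,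
    packed_land hc fun e => by rw [mask]; split <;> omega]
  refine congrArg _ (funext fun e => ?_)
  rw [mask, sliceCoeff]
  split
  · exact Nat.and_two_pow_sub_one_of_lt_two_pow (hc e)
  · exact Nat.and_zero _

theorem packed_sliceCoeff (a : Fin A) (i : ℕ) (c : (Fin A → Fin (n + 1)) → ℕ) :
    packed b (sliceCoeff a i c) = 2 ^ (stride b n a * i)
      * bernsteinEval (sliceCoeff a i c) (Function.update (fun _ => 1) a 1)
        (Function.update (fun c => 2 ^ stride b n c) a 1) := by
  calc packed b (sliceCoeff a i c)
      = bernsteinEval (sliceCoeff a i c) (Function.update (fun _ => 1) a 1)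
        (Function.update (fun c => 2 ^ stride b n c) a (2 ^ stride b n a)) := by
        rw [Function.update_eq_self a fun c : Fin A => 2 ^ stride b n c,
          Function.update_eq_self a fun _ : Fin A => 1, packed]
    _ = _ := by rw [bernsteinEval_sliceCoeff_update, one_pow, one_mul, ← pow_mul]

theorem leftHalf_packed (a : Fin A) {c : (Fin A → Fin (n + 1)) → ℕ} (hc : ∀ e, c e < 2 ^ b) :
    leftHalf A b n a (packed b c)
      = bernsteinEval c (Function.update (fun _ => 1) a (2 + 2 ^ stride b n a))
        (Function.update (fun d => 2 ^ stride b n d) a (2 ^ stride b n a)) := by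
  rw [leftHalf, horner_eq_sum, ← sum_bernsteinEval_sliceCoeff a]
  refine Finset.sum_congr rfl fun i hi => ?_
  rw [slice_packed a (Nat.le_of_lt_succ (Finset.mem_range.1 hi)) hc, packed_sliceCoeff,
    bernsteinEval_sliceCoeff_update a i c _ _ (2 + _), pow_mul, mul_assoc]

theorem rightHalf_packed (a : Fin A) {c : (Fin A → Fin (n + 1)) → ℕ} (hc : ∀ e, c e < 2 ^ b) :
    rightHalf A b n a (packed b c)
      = bernsteinEval c (Function.update (fun _ => 1) a 1)
        (Function.update (fun d => 2 ^ stride b n d) a (1 + 2 * 2 ^ stride b n a)) := by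
  rw [rightHalf, horner_eq_sum, ← sum_bernsteinEval_sliceCoeff a, ← Finset.sum_range_reflect]
  refine Finset.sum_congr rfl fun i hi => ?_
  have hi : i ≤ n := Nat.le_of_lt_succ (Finset.mem_range.1 hi)
  have reflect : n - (n + 1 - 1 - i) = i := by omega
  rw [reflect, slice_packed a hi hc, packed_sliceCoeff, Nat.shiftRight_eq_div_pow,
    Nat.mul_div_cancel_left _ (by positivity), pow_succ',
    bernsteinEval_sliceCoeff_update a i c _ _ 1 (1 + _), one_pow, one_mul]

end Halves

/-! ### Subdivision -/

section Encoding

/-- How the coefficients of a form of degree `degree` in each variable are packed: relative to those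
of `∏ₐ (zₐ + xₐ) ^ degree` they are at most `2 * norm`, and to be compared with `threshold`; each
occupies `width` bits. -/
structure Format where
  (width degree norm threshold : ℕ)

/-- The packed coefficients and their transforms do not overflow into neighbouring digits. -/
structure Format.Fits (F : Format) (A : ℕ) : Prop where
  width_pos : 1 ≤ F.width
  degree_le : F.degree ≤ F.width
  norm_lt : 2 ^ F.degree * (2 * F.norm) * 2 ^ (F.degree * A) < 2 ^ (F.width - 1)
  threshold_le : F.threshold * 2 ^ (F.degree * A) ≤ 2 ^ (F.width - 1)

variable {A : ℕ} {F : Format} {W : ℕ} {z x : Fin A → ℝ} {V : ℝ}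

/-- `W` packs a form whose value at `(z, x)` is at most `V`. -/
def Encodes (F : Format) (W : ℕ) (z x : Fin A → ℝ) (V : ℝ) : Prop :=
  ∃ c : (Fin A → Fin (F.degree + 1)) → ℕ, (∀ e, c e ≤ 2 * F.norm * binomials e) ∧
    packed F.width c = W ∧ bernsteinEval c z x ≤ V

theorem Format.Fits.lt_of_le (hF : F.Fits A) {k : ℕ} {e : Fin A → Fin (F.degree + 1)}
    (hk : k ≤ 2 ^ F.degree * (2 * F.norm) * binomials e) : k < 2 ^ (F.width - 1) :=
  hk.trans_lt ((Nat.mul_le_mul_left _ (binomials_le e)).trans_lt hF.norm_lt)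

theorem Format.Fits.lt_two_pow_width (hF : F.Fits A) {k : ℕ} {e : Fin A → Fin (F.degree + 1)}
    (hk : k ≤ 2 ^ F.degree * (2 * F.norm) * binomials e) : k < 2 ^ F.width :=
  (hF.lt_of_le hk).trans_le (Nat.pow_le_pow_right two_pos (Nat.sub_le _ _))

theorem le_two_pow_mul {k M : ℕ} (n : ℕ) {B : ℕ} (h : k ≤ M * B) : k ≤ 2 ^ n * M * B :=
  h.trans (Nat.mul_le_mul_right B (Nat.le_mul_of_pos_left M (by positivity)))

theorem Encodes.threshold_mul_le (h : Encodes F W z x V) (hF : F.Fits A)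
    (hW : digitsGE A F.width F.degree W F.threshold) (hz : ∀ a, 0 ≤ z a) (hx : ∀ a, 0 ≤ x a) :
    F.threshold * ∏ a, (z a + x a) ^ F.degree ≤ V := by
  obtain ⟨c, hc, rfl, hV⟩ := h
  have hle := le_of_digitsGE (fun e => hF.lt_of_le (le_two_pow_mul _ (hc e))) hF.threshold_le
    hF.width_pos hW
  calc F.threshold * ∏ a, (z a + x a) ^ F.degree
      = bernsteinEval (fun e => F.threshold * binomials (n := F.degree) e) z x := by
        rw [bernsteinEval_mul_left, bernsteinEval_binomials]
    _ ≤ bernsteinEval c z x := bernsteinEval_mono hle hz hx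
    _ ≤ V := hV

theorem bernsteinEval_div_le {n : ℕ} (c : (Fin A → Fin (n + 1)) → ℕ) (k : ℕ)
    (hz : ∀ a, 0 ≤ z a) (hx : ∀ a, 0 ≤ x a) :
    k * bernsteinEval (fun e => c e / k) z x ≤ bernsteinEval c z x := by
  rw [← bernsteinEval_mul_left]
  exact bernsteinEval_mono (fun e => Nat.mul_div_le _ _) hz hx

theorem Encodes.substitute (h : Encodes F W z x V) (hF : F.Fits A) (a : Fin A) {α β γ δ : ℕ}
    (hα : α + γ = 2) (hβ : β + δ = 2) {s t : ℝ} (hs : α * s + β * t = 2 * z a)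
    (ht : γ * s + δ * t = 2 * x a) (hz' : ∀ b, 0 ≤ Function.update z a s b)
    (hx' : ∀ b, 0 ≤ Function.update x a t b) {W' : ℕ}
    (hW' : ∀ c : (Fin A → Fin (F.degree + 1)) → ℕ, (∀ e, c e < 2 ^ F.width) →
      packed F.width c = W → W' = bernsteinEval c
        (Function.update (fun _ => 1) a (α + β * 2 ^ stride F.width F.degree a))
        (Function.update (fun d => 2 ^ stride F.width F.degree d) a
          (γ + δ * 2 ^ stride F.width F.degree a))) :
    Encodes F (floorDigits A F.width F.degree W') (Function.update z a s)
      (Function.update x a t) V := by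
  obtain ⟨c, hc, hW, hV⟩ := h
  obtain ⟨d, hd, hcd⟩ := exists_bernsteinEval_update hc a hα hβ
  have packing : W' = packed F.width d := by
    rw [hW' c (fun e => hF.lt_two_pow_width (le_two_pow_mul _ (hc e))) hW, packed, hcd]
    simp only [Nat.cast_id, mul_one]
  refine ⟨fun e => d e / 2 ^ F.degree, fun e => ?_, ?_, ?_⟩
  · exact Nat.div_le_of_le_mul ((hd e).trans_eq (mul_assoc ..))
  · rw [packing, floorDigits_packed hF.degree_le fun e => hF.lt_two_pow_width (hd e)]
  · have doubling : bernsteinEval d (Function.update z a s) (Function.update x a t)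
        = 2 ^ F.degree * bernsteinEval c z x := by
      rw [hcd, Function.update_self, Function.update_self, hs, ht, Function.update_idem,
        Function.update_idem, bernsteinEval_update_mul]
    have floor := bernsteinEval_div_le d (2 ^ F.degree) hz' hx'
    rw [doubling, Nat.cast_pow, Nat.cast_two] at floor
    exact (le_of_mul_le_mul_left floor (by positivity)).trans hV

theorem forall_update_nonneg (hz : ∀ a, 0 ≤ z a) (a : Fin A) {s : ℝ} (hs : 0 ≤ s) (b : Fin A) :
    0 ≤ Function.update z a s b := by
  rw [Function.update_apply]
  split
  · exact hs
  · exact hz b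

theorem Encodes.leftHalf (h : Encodes F W z x V) (hF : F.Fits A) (hz : ∀ a, 0 ≤ z a)
    (hx : ∀ a, 0 ≤ x a) (a : Fin A) (hxz : x a ≤ z a) :
    Encodes F (floorDigits A F.width F.degree (leftHalf A F.width F.degree a W))
      (Function.update z a (z a - x a)) (Function.update x a (2 * x a)) V := by
  refine h.substitute hF a (α := 2) (β := 1) (γ := 0) (δ := 1) rfl rfl (by push_cast; ring)
    (by push_cast; ring) (forall_update_nonneg hz a (sub_nonneg.2 hxz))
    (forall_update_nonneg hx a (mul_nonneg zero_le_two (hx a))) fun c hc hW => ?_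
  rw [← hW, leftHalf_packed a hc, one_mul, zero_add]

theorem Encodes.rightHalf (h : Encodes F W z x V) (hF : F.Fits A) (hz : ∀ a, 0 ≤ z a)
    (hx : ∀ a, 0 ≤ x a) (a : Fin A) (hzx : z a ≤ x a) :
    Encodes F (floorDigits A F.width F.degree (rightHalf A F.width F.degree a W))
      (Function.update z a (2 * z a)) (Function.update x a (x a - z a)) V := by
  refine h.substitute hF a (α := 1) (β := 0) (γ := 1) (δ := 2) rfl rfl (by push_cast; ring)
    (by push_cast; ring) (forall_update_nonneg hz a (mul_nonneg zero_le_two (hz a)))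
    (forall_update_nonneg hx a (sub_nonneg.2 hzx)) fun c hc hW => ?_
  rw [← hW, rightHalf_packed a hc, zero_mul, add_zero]

end Encoding

section Subdivision

variable {A : ℕ}

/-- `X` lies in the interval `[3 * l / q, 3 * (l + 1) / q]`, where `c = (l, q)`, and has there the
barycentric coordinates `z` and `x`, scaled to sum to `3`. The right endpoint is excluded unless it
is `3`. -/
structure HasLocalCoords (c : ℕ × ℕ) (X z x : ℝ) : Prop where
  add_eq : z + x = 3
  left_nonneg : 0 ≤ z
  right_nonneg : 0 ≤ x
  lt : c.1 < c.2
  mul_eq : c.2 * X = 3 * c.1 + x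
  lt_or_last : x < 3 ∨ c.1 + 1 = c.2

namespace HasLocalCoords

variable {c : ℕ × ℕ} {X z x : ℝ}

theorem left (h : HasLocalCoords c X z x) (hxz : x < z) :
    HasLocalCoords (2 * c.1, 2 * c.2) X (z - x) (2 * x) where
  add_eq := by linear_combination h.add_eq
  left_nonneg := sub_nonneg.2 hxz.le
  right_nonneg := mul_nonneg zero_le_two h.right_nonneg
  lt := Nat.mul_lt_mul_of_pos_left h.lt two_pos
  mul_eq := by push_cast; linear_combination 2 * h.mul_eq
  lt_or_last := Or.inl (by linarith [h.add_eq])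

theorem right (h : HasLocalCoords c X z x) (hzx : z ≤ x) :
    HasLocalCoords (2 * c.1 + 1, 2 * c.2) X (2 * z) (x - z) where
  add_eq := by linear_combination h.add_eq
  left_nonneg := mul_nonneg zero_le_two h.left_nonneg
  right_nonneg := sub_nonneg.2 hzx
  lt := by have := h.lt; omega
  mul_eq := by push_cast; linear_combination 2 * h.mul_eq + h.add_eq
  lt_or_last := h.lt_or_last.imp (fun hlt => by linarith [h.add_eq]) fun hlast => by omega

theorem lt_of_mul_le {c' : ℕ × ℕ} {X' z' x' : ℝ} (h : HasLocalCoords c X z x)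
    (h' : HasLocalCoords c' X' z' x') (hle : (c.1 + 1) * c'.2 ≤ c'.1 * c.2) : X < X' := by
  have hc : (0 : ℝ) < c.2 := Nat.cast_pos.2 h.lt.pos
  have hc' : (0 : ℝ) < c'.2 := Nat.cast_pos.2 h'.lt.pos
  have hx : x < 3 := h.lt_or_last.resolve_right fun hlast => by
    rw [hlast, mul_comm] at hle
    exact (Nat.le_of_mul_le_mul_right hle h.lt.pos).not_gt h'.lt
  have hleR : ((c.1 : ℝ) + 1) * c'.2 ≤ c'.1 * c.2 := mod_cast hle
  have : c.2 * c'.2 * X < c.2 * c'.2 * X' := by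
    calc c.2 * c'.2 * X = (3 * c.1 + x) * c'.2 := by rw [← h.mul_eq]; ring
      _ < 3 * ((c.1 + 1) * c'.2) := by nlinarith
      _ ≤ 3 * (c'.1 * c.2) := by gcongr
      _ ≤ c.2 * (3 * c'.1 + x') := by nlinarith [h'.right_nonneg]
      _ = c.2 * c'.2 * X' := by rw [← h'.mul_eq]; ring
  exact lt_of_mul_lt_mul_left this (by positivity)

end HasLocalCoords

/-- A dyadic subcube of `[0, 3] ^ A` with the packed Bernstein coefficients, relative to it, of
the objective and of the constraint. For `corner a = (l, q)` the `a`-th side of the cube is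
`[3 * l / q, 3 * (l + 1) / q]`. -/
structure Cell (A : ℕ) where
  (objective constraint : ℕ)
  corner : Fin A → ℕ × ℕ

namespace Cell

/-- The lower half of the cell along the axis `a`. -/
def left (F G : Format) (a : Fin A) (C : Cell A) : Cell A where
  objective := floorDigits A F.width F.degree (leftHalf A F.width F.degree a C.objective)
  constraint := floorDigits A G.width G.degree (leftHalf A G.width G.degree a C.constraint)
  corner := Function.update C.corner a (2 * (C.corner a).1, 2 * (C.corner a).2)

/-- The upper half of the cell along the axis `a`. -/
def right (F G : Format) (a : Fin A) (C : Cell A) : Cell A where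
  objective := floorDigits A F.width F.degree (rightHalf A F.width F.degree a C.objective)
  constraint := floorDigits A G.width G.degree (rightHalf A G.width G.degree a C.constraint)
  corner := Function.update C.corner a (2 * (C.corner a).1 + 1, 2 * (C.corner a).2)

/-- The cell lies outside the region of antitone points, up to its boundary. -/
def IsUnsorted (C : Cell A) : Prop :=
  ∃ a b : Fin A, a < b ∧ ((C.corner a).1 + 1) * (C.corner b).2 ≤ (C.corner b).1 * (C.corner a).2

instance (C : Cell A) : Decidable C.IsUnsorted :=
  inferInstanceAs (Decidable (∃ _ _ : Fin A, _))

/-- The cell needs no further subdivision. -/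
def isLeaf (F G : Format) (C : Cell A) : Bool :=
  decide C.IsUnsorted || digitsGE A G.width G.degree C.constraint G.threshold
    || digitsGE A F.width F.degree C.objective F.threshold

/-- Subdivides a cell along the given axes until all parts are leaves. -/
def certify (F G : Format) : List (Fin A) → Cell A → Bool
  | [], C => C.isLeaf F G
  | a :: l, C => C.isLeaf F G || (certify F G l (C.left F G a) && certify F G l (C.right F G a))

/-- The point `X` lies in the cell, and its value under the objective is at most `V` and under the
constraint at most `V'`. -/
def Contains (F G : Format) (C : Cell A) (X : Fin A → ℝ) (V V' : ℝ) : Prop :=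
  ∃ z x, (∀ a, HasLocalCoords (C.corner a) (X a) (z a) (x a)) ∧
    Encodes F C.objective z x V ∧ Encodes G C.constraint z x V'

variable {F G : Format} {C : Cell A} {X : Fin A → ℝ} {V V' : ℝ}

theorem Contains.exists_half (h : C.Contains F G X V V') (hF : F.Fits A) (hG : G.Fits A)
    (a : Fin A) : (C.left F G a).Contains F G X V V' ∨ (C.right F G a).Contains F G X V V' := by
  obtain ⟨z, x, hX, hobj, hcon⟩ := h
  have hz (b : Fin A) : 0 ≤ z b := (hX b).left_nonneg
  have hx (b : Fin A) : 0 ≤ x b := (hX b).right_nonneg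
  rcases lt_or_ge (x a) (z a) with hxz | hzx
  · refine Or.inl ⟨_, _, fun b => ?_, hobj.leftHalf hF hz hx a hxz.le,
      hcon.leftHalf hG hz hx a hxz.le⟩
    rcases eq_or_ne b a with rfl | hb
    · simpa only [left, Function.update_self] using (hX b).left hxz
    · simpa only [left, Function.update_of_ne hb] using hX b
  · refine Or.inr ⟨_, _, fun b => ?_, hobj.rightHalf hF hz hx a hzx, hcon.rightHalf hG hz hx a hzx⟩
    rcases eq_or_ne b a with rfl | hb
    · simpa only [right, Function.update_self] using (hX b).right hzx
    · simpa only [right, Function.update_of_ne hb] using hX b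

theorem Contains.threshold_le_of_isLeaf (h : C.Contains F G X V V') (hF : F.Fits A)
    (hG : G.Fits A) (hX : Antitone X) (hV' : V' < G.threshold * 3 ^ (G.degree * A))
    (hleaf : C.isLeaf F G) : F.threshold * 3 ^ (F.degree * A) ≤ V := by
  obtain ⟨z, x, hcoords, hobj, hcon⟩ := h
  have hz (a : Fin A) : 0 ≤ z a := (hcoords a).left_nonneg
  have hx (a : Fin A) : 0 ≤ x a := (hcoords a).right_nonneg
  have volume (n : ℕ) : ∏ a, (z a + x a) ^ n = 3 ^ (n * A) := by
    simp only [fun a => (hcoords a).add_eq, Finset.prod_const, Finset.card_univ, Fintype.card_fin,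
      pow_mul]
  simp only [isLeaf, Bool.or_eq_true, decide_eq_true_eq] at hleaf
  rcases hleaf with (⟨a, b, hab, hle⟩ | hdigits) | hdigits
  · exact absurd (hX hab.le) ((hcoords a).lt_of_mul_le (hcoords b) hle).not_ge
  · have := hcon.threshold_mul_le hG hdigits hz hx
    rw [volume] at this
    exact absurd this hV'.not_ge
  · have := hobj.threshold_mul_le hF hdigits hz hx
    rwa [volume] at this

theorem Contains.threshold_le (h : C.Contains F G X V V') (hF : F.Fits A) (hG : G.Fits A)
    (hX : Antitone X) (hV' : V' < G.threshold * 3 ^ (G.degree * A)) {l : List (Fin A)}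
    (hl : C.certify F G l) : F.threshold * 3 ^ (F.degree * A) ≤ V := by
  induction l generalizing C with
  | nil => exact h.threshold_le_of_isLeaf hF hG hX hV' hl
  | cons a l ih =>
    rw [certify, Bool.or_eq_true, Bool.and_eq_true] at hl
    rcases hl with hleaf | ⟨hleft, hright⟩
    · exact h.threshold_le_of_isLeaf hF hG hX hV' hleaf
    · exact (h.exists_half hF hG a).elim (fun h => ih h hleft) fun h => ih h hright

theorem certify_cons {a : Fin A} {l : List (Fin A)} (hleft : (C.left F G a).certify F G l)
    (hright : (C.right F G a).certify F G l) : C.certify F G (a :: l) := by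
  rw [certify, hleft, hright, Bool.and_self, Bool.or_true]

end Cell

end Subdivision

section NaturalForms

open MvPolynomial

/-- A form of degree `n` in each of the `A` pairs of variables, given by a procedure which
evaluates it in every commutative semiring. The element `ε` stands for `-1`, so that the same
procedure evaluates the form itself (`ε = -1`) and the form with the signs removed (`ε = 1`). -/
structure NaturalForm (A n : ℕ) where
  eval : ∀ {R : Type} [CommSemiring R], R → (Fin A → R × R) → R
  map_eval : ∀ {R R' : Type} [CommSemiring R] [CommSemiring R'] (φ : R →+* R') (ε : R)
    (p : Fin A → R × R), φ (eval ε p) = eval (φ ε) fun a => Prod.map φ φ (p a)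
  eval_smul : ∀ {R : Type} [CommSemiring R] (ε : R) (c : Fin A → R) (p : Fin A → R × R),
    eval ε (fun a => c a • p a) = (∏ a, c a) ^ n * eval ε p

namespace NaturalForm

variable {A n : ℕ} (P : NaturalForm A n)

theorem isSummand_eval_one {K : ℕ} (hK : P.eval 1 (fun _ => (1, 1)) ≤ K) :
    IsSummand (P.eval 1 fun a => (X (Sum.inl a), X (Sum.inr a)))
      (bernsteinForm fun e : Fin A → Fin (n + 1) => K * binomials e) := by
  let Z (a : Fin A) : MvPolynomial (Fin A ⊕ Fin A) ℕ := X (Sum.inl a)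
  let Y (a : Fin A) : MvPolynomial (Fin A ⊕ Fin A) ℕ := X (Sum.inr a)
  let S : Fin A ⊕ Fin A → MvPolynomial (Fin A ⊕ Fin A) ℕ :=
    Sum.elim (fun a => Z a + Y a) fun a => Z a + Y a
  have enlarge (i) : IsSummand (X i) (S i) := by
    cases i with
    | inl a => exact ⟨Y a, rfl⟩
    | inr a => exact ⟨Z a, add_comm _ _⟩
  have image : aeval S (P.eval 1 fun a => (Z a, Y a))
      = (∏ a, (Z a + Y a)) ^ n * (P.eval 1 (fun _ => (1, 1)) : ℕ) := by
    have naturality := P.map_eval (aeval S).toRingHom 1 fun a => (Z a, Y a)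
    have constant := P.map_eval (Nat.castRingHom (MvPolynomial (Fin A ⊕ Fin A) ℕ)) 1
      fun _ => (1, 1)
    have scaling := P.eval_smul 1 (fun a => Z a + Y a) fun _ => (1, 1)
    simp_all [S, Z, Y]
  have bound := isSummand_aeval enlarge (P.eval 1 fun a => (Z a, Y a))
  rw [image, aeval_X_left_apply] at bound
  rw [bernsteinForm, bernsteinEval_mul_left, ← bernsteinForm, bernsteinForm_binomials,
    Finset.prod_pow, mul_comm]
  exact bound.trans ((IsSummand.refl _).mul (isSummand_natCast hK))

theorem exists_bernsteinEval_eq {K : ℕ} (hK : P.eval 1 (fun _ => (1, 1)) ≤ K) :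
    ∃ c : (Fin A → Fin (n + 1)) → ℕ, (∀ e, c e ≤ 2 * K * binomials e) ∧
      ∀ (R : Type) [CommRing R] (z x : Fin A → R), bernsteinEval c z x
        = K * ∏ a, (z a + x a) ^ n - P.eval (-1) fun a => (z a, x a) := by
  let F : Polynomial (MvPolynomial (Fin A ⊕ Fin A) ℕ) :=
    P.eval Polynomial.X fun a => (Polynomial.C (X (Sum.inl a)), Polynomial.C (X (Sum.inr a)))
  have unsigned : F.eval 1 = P.eval 1 fun a => (X (Sum.inl a), X (Sum.inr a)) := by
    have := P.map_eval (Polynomial.evalRingHom (1 : MvPolynomial (Fin A ⊕ Fin A) ℕ)) Polynomial.X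
      fun a => (Polynomial.C (X (Sum.inl a)), Polynomial.C (X (Sum.inr a)))
    simpa using this
  obtain ⟨c, hc, h⟩ := exists_bernsteinEval_eq_sub (unsigned ▸ P.isSummand_eval_one hK)
  refine ⟨c, hc, fun R _ z x => ?_⟩
  have signed := P.map_eval (Polynomial.eval₂RingHom
    (aeval (Sum.elim z x) : _ →ₐ[ℕ] R).toRingHom (-1)) Polynomial.X
    fun a => (Polynomial.C (X (Sum.inl a)), Polynomial.C (X (Sum.inr a)))
  simp only [Polynomial.coe_eval₂RingHom, Polynomial.eval₂_X, Prod.map_apply, Polynomial.eval₂_C,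
    AlgHom.toRingHom_eq_coe, RingHom.coe_coe, aeval_X, Sum.elim_inl, Sum.elim_inr] at signed
  rw [h, ← signed]
  rfl

end NaturalForm

variable {A : ℕ} {F G : Format}

/-- The packed Bernstein coefficients of `F.norm * ∏ₐ (zₐ + xₐ) ^ F.degree - P`. -/
def NaturalForm.packedComplement (P : NaturalForm A F.degree) : ℕ :=
  (F.norm * packedBinomials A F.width F.degree
    - P.eval (-1 : ℤ) fun a => (1, (2 ^ stride F.width F.degree a : ℕ)) : ℤ).toNat

theorem NaturalForm.encodes_packedComplement (P : NaturalForm A F.degree)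
    (hP : P.eval 1 (fun _ => (1, 1)) ≤ F.norm) (z x : Fin A → ℝ) :
    Encodes F P.packedComplement z x
      (F.norm * ∏ a, (z a + x a) ^ F.degree - P.eval (-1) fun a => (z a, x a)) := by
  obtain ⟨c, hc, h⟩ := P.exists_bernsteinEval_eq hP
  refine ⟨c, hc, ?_, (h ℝ z x).le⟩
  have binomial : (packedBinomials A F.width F.degree : ℤ)
      = ∏ a : Fin A, ((1 : ℤ) + (2 ^ stride F.width F.degree a : ℕ)) ^ F.degree := by
    simp [packedBinomials]
  have packing : (packed F.width c : ℤ)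
      = bernsteinEval c (fun _ => 1) fun a => ((2 ^ stride F.width F.degree a : ℕ) : ℤ) := by
    simpa [packed, Function.comp_def] using map_bernsteinEval (Nat.castRingHom ℤ) c (fun _ => 1)
      fun a => 2 ^ stride F.width F.degree a
  rw [packedComplement, binomial, ← h ℤ (fun _ => 1), ← packing, Int.toNat_natCast]

/-- The cube `[0, 3] ^ A` with the objective `P` and the constraint `Q`. -/
def rootCell (P : NaturalForm A F.degree) (Q : NaturalForm A G.degree) : Cell A where
  objective := P.packedComplement
  constraint := Q.packedComplement
  corner _ := (0, 1)

theorem NaturalForm.eval_le_of_certify (P : NaturalForm A F.degree) (Q : NaturalForm A G.degree)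
    (hF : F.Fits A) (hG : G.Fits A) (hP : P.eval 1 (fun _ => (1, 1)) ≤ F.norm)
    (hQ : Q.eval 1 (fun _ => (1, 1)) ≤ G.norm) {l : List (Fin A)}
    (hl : (rootCell P Q).certify F G l) {X : Fin A → ℝ} (hX : Antitone X) (hX₀ : ∀ a, 0 ≤ X a)
    (hX₃ : ∀ a, X a ≤ 3)
    (hconstraint : (G.norm - G.threshold) * 3 ^ (G.degree * A)
      < Q.eval (-1) fun a => (3 - X a, X a)) :
    P.eval (-1) (fun a => (3 - X a, X a))
      ≤ (F.norm - F.threshold) * 3 ^ (F.degree * A) := by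
  have volume (n : ℕ) : ∏ a, (3 - X a + X a) ^ n = 3 ^ (n * A) := by
    simp only [sub_add_cancel, Finset.prod_const, Finset.card_univ, Fintype.card_fin, pow_mul]
  have objective := P.encodes_packedComplement hP (fun a => 3 - X a) X
  have constraint := Q.encodes_packedComplement hQ (fun a => 3 - X a) X
  rw [volume] at objective constraint
  have contains : (rootCell P Q).Contains F G X _ _ :=
    ⟨_, _, fun a => ⟨sub_add_cancel _ _, sub_nonneg.2 (hX₃ a), hX₀ a, one_pos,
      by simp [rootCell], Or.inr rfl⟩, objective, constraint⟩
  have := contains.threshold_le hF hG hX (by linarith) hl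
  linarith

end NaturalForms

/-! ### Kernels -/

section Kernels

variable {R : Type*} [CommSemiring R]

/-- The image of an integer, with `ε` in place of `-1`. -/
def signedCast (ε : R) : ℤ → R
  | .ofNat n => n
  | .negSucc n => ε * (n + 1 : ℕ)

/-- The binary form with the given coefficients, starting from the power of `p.1`. -/
def binaryForm (ε : R) (p : R × R) : List ℤ → R
  | [] => 0
  | a :: l => signedCast ε a * p.1 ^ l.length + p.2 * binaryForm ε p l

/-- `∑ᵢ gᵢ(p) gᵢ(q)`, where `gᵢ` is `p.2 ^ i` times the `i`-th binary form in the list: the rows of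
a triangular factor of a positive semidefinite matrix. -/
def gramKernel (ε : R) (p q : R × R) : List (List ℤ) → R
  | [] => 0
  | l :: ls => binaryForm ε p l * binaryForm ε q l + p.2 * q.2 * gramKernel ε p q ls

/-- The Gegenbauer polynomial of degree `k` for the sphere in dimension `d + 2`, homogenised by `w`
in place of the square of the norm and normalised to be integral. -/
def gegenbauer (d : ℕ) (ε s w : R) : ℕ → R
  | 0 => 1
  | 1 => d * s
  | k + 2 => (2 * (k + 1) + d : ℕ) * s * gegenbauer d ε s w (k + 1)
      + ε * ((k + 1) * (k + d) : ℕ) * w * gegenbauer d ε s w k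

/-- `z + x` for the pair `(z, x)`. A cosine `u` is represented by the pair
`(1 - 2 * u, 2 + 2 * u)`, with sum `3`. -/
def total (p : R × R) : R := p.1 + p.2

/-- `6 * u` for the pair that represents the cosine `u`. -/
def cosine (ε : R) (p : R × R) : R := p.2 + ε * 2 * p.1

/-- `12 * (1 - u ^ 2)` for the pair that represents the cosine `u`. -/
def sineSq (p : R × R) : R := p.2 * (4 * p.1 + p.2)

/-- `108 * (t - u * v)` for pairs that represent `u`, `v`, `t`. For unit vectors `x`, `y`, `z` with
`u = ⟪x, y⟫`, `v = ⟪x, z⟫`, `t = ⟪y, z⟫`, this is the inner product of the projections of `y` and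
`z` to the orthogonal complement of `x`. -/
def projInner (ε : R) (p q r : R × R) : R :=
  2 * cosine ε r * total p * total q + ε * cosine ε p * cosine ε q * total r

/-- `108 ^ 2 * (1 - u ^ 2) * (1 - v ^ 2)` for pairs that represent `u`, `v`. -/
def projNormSq (p q r : R × R) : R := 9 * total r ^ 2 * sineSq p * sineSq q

/-- The three-point kernel of Bachoc and Vallentin whose parts of degree `k`, `k + 1`, … in the
Gegenbauer polynomials are given by the triangular factors in the list, each with a power of `2` as
a weight. -/
def threePoint (d : ℕ) (ε : R) (p q r : R × R) : ℕ → List (ℕ × List (List ℤ)) → R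
  | _, [] => 0
  | k, (m, rows) :: D =>
      2 ^ m * gramKernel ε p q rows * total r ^ D.length
          * gegenbauer d ε (projInner ε p q r) (projNormSq p q r) k
        + threePoint d ε p q r (k + 1) D

/-- The two-point kernel of Delsarte whose parts of degree `k`, `k + 1`, … have the coefficients in
the list. -/
def twoPoint (d : ℕ) (ε : R) (p : R × R) : ℕ → List ℕ → R
  | _, [] => 0
  | k, a :: L =>
      a * total p ^ L.length * gegenbauer d ε (cosine ε p) (4 * total p ^ 2) k
        + twoPoint d ε p (k + 1) L

/-- `4 * 3 ^ 6 * (1 + 2 * u * v * t - u ^ 2 - v ^ 2 - t ^ 2)` for pairs that represent `u`, `v`,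
`t`. -/
def gramDet (ε : R) (p q r : R × R) : R :=
  4 * (total p * total q * total r) ^ 2
    + total p * total q * total r * cosine ε p * cosine ε q * cosine ε r
    + ε * ((cosine ε p * total q * total r) ^ 2 + (total p * cosine ε q * total r) ^ 2
      + (total p * total q * cosine ε r) ^ 2)

end Kernels

section Naturality

variable {R R' : Type*} [CommSemiring R] [CommSemiring R'] (φ : R →+* R') (ε : R)

theorem map_signedCast (a : ℤ) : φ (signedCast ε a) = signedCast (φ ε) a := by
  cases a <;> simp [signedCast]

theorem map_binaryForm (p : R × R) (l : List ℤ) :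
    φ (binaryForm ε p l) = binaryForm (φ ε) (Prod.map φ φ p) l := by
  induction l with
  | nil => exact map_zero φ
  | cons a l ih => simp [binaryForm, map_signedCast, ih]

theorem map_gramKernel (p q : R × R) (rows : List (List ℤ)) :
    φ (gramKernel ε p q rows) = gramKernel (φ ε) (Prod.map φ φ p) (Prod.map φ φ q) rows := by
  induction rows with
  | nil => exact map_zero φ
  | cons l rows ih => simp [gramKernel, map_binaryForm, ih]

theorem map_gegenbauer (d : ℕ) (s w : R) (k : ℕ) :
    φ (gegenbauer d ε s w k) = gegenbauer d (φ ε) (φ s) (φ w) k := by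
  induction k using Nat.twoStepInduction with
  | zero => exact map_one φ
  | one => simp [gegenbauer]
  | more k ih ih' => simp [gegenbauer, map_ofNat, ih, ih']

theorem map_total (p : R × R) : φ (total p) = total (Prod.map φ φ p) := map_add φ _ _

theorem map_cosine (p : R × R) : φ (cosine ε p) = cosine (φ ε) (Prod.map φ φ p) := by
  simp [cosine, map_ofNat]

theorem map_projInner (p q r : R × R) : φ (projInner ε p q r)
    = projInner (φ ε) (Prod.map φ φ p) (Prod.map φ φ q) (Prod.map φ φ r) := by
  simp [projInner, map_ofNat, map_total, map_cosine]

theorem map_projNormSq (p q r : R × R) : φ (projNormSq p q r)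
    = projNormSq (Prod.map φ φ p) (Prod.map φ φ q) (Prod.map φ φ r) := by
  simp [projNormSq, map_ofNat, sineSq, map_total]

theorem map_threePoint (d : ℕ) (p q r : R × R) (k : ℕ) (D : List (ℕ × List (List ℤ))) :
    φ (threePoint d ε p q r k D)
      = threePoint d (φ ε) (Prod.map φ φ p) (Prod.map φ φ q) (Prod.map φ φ r) k D := by
  induction D generalizing k with
  | nil => exact map_zero φ
  | cons a D ih =>
    simp [threePoint, map_ofNat, map_gramKernel, map_total, map_gegenbauer, map_projInner,
      map_projNormSq, ih]

theorem map_twoPoint (d : ℕ) (p : R × R) (k : ℕ) (L : List ℕ) :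
    φ (twoPoint d ε p k L) = twoPoint d (φ ε) (Prod.map φ φ p) k L := by
  induction L generalizing k with
  | nil => exact map_zero φ
  | cons a L ih => simp [twoPoint, map_ofNat, map_total, map_gegenbauer, map_cosine, ih]

theorem map_gramDet (p q r : R × R) : φ (gramDet ε p q r)
    = gramDet (φ ε) (Prod.map φ φ p) (Prod.map φ φ q) (Prod.map φ φ r) := by
  simp [gramDet, map_ofNat, map_total, map_cosine]

end Naturality

section Homogeneity

variable {R : Type*} [CommSemiring R] (ε : R)

theorem binaryForm_smul (c : R) (p : R × R) {l : List ℤ} {m : ℕ} (hl : l.length = m + 1) :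
    binaryForm ε (c • p) l = c ^ m * binaryForm ε p l := by
  induction l generalizing m with
  | nil => exact absurd hl (Nat.succ_ne_zero m).symm
  | cons a l ih =>
    obtain rfl : l.length = m := Nat.succ_injective hl
    cases l with
    | nil => simp [binaryForm]
    | cons b l =>
      rw [binaryForm, ih rfl, binaryForm.eq_2 ε p a]
      simp only [Prod.smul_fst, Prod.smul_snd, smul_eq_mul, List.length_cons]
      ring

/-- The lists have lengths `m + 1`, `m`, `m - 1`, …, so that all the forms in `gramKernel` have
degree `m`. -/
def IsTriangular : ℕ → List (List ℤ) → Prop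
  | _, [] => True
  | 0, l :: ls => l.length = 1 ∧ ls = []
  | m + 1, l :: ls => l.length = m + 2 ∧ IsTriangular m ls

instance : ∀ (m : ℕ) (rows : List (List ℤ)), Decidable (IsTriangular m rows)
  | 0, [] => isTrue trivial
  | _ + 1, [] => isTrue trivial
  | 0, _ :: _ => inferInstanceAs (Decidable (_ ∧ _))
  | m + 1, _ :: ls =>
    have := instDecidableIsTriangular m ls
    inferInstanceAs (Decidable (_ ∧ _))

theorem gramKernel_smul (c c' : R) (p q : R × R) {m : ℕ} {rows : List (List ℤ)}
    (h : IsTriangular m rows) :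
    gramKernel ε (c • p) (c' • q) rows = (c * c') ^ m * gramKernel ε p q rows := by
  induction rows generalizing m with
  | nil => exact (mul_zero _).symm
  | cons l rows ih =>
    cases m with
    | zero =>
      obtain ⟨hl, rfl⟩ := h
      simp [gramKernel, binaryForm_smul ε _ _ hl]
    | succ m =>
      rw [gramKernel, gramKernel, binaryForm_smul ε _ _ h.1, binaryForm_smul ε _ _ h.1, ih h.2]
      simp only [Prod.smul_snd, smul_eq_mul]
      ring

theorem gegenbauer_mul (d : ℕ) (c s w : R) (k : ℕ) :
    gegenbauer d ε (c * s) (c ^ 2 * w) k = c ^ k * gegenbauer d ε s w k := by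
  induction k using Nat.twoStepInduction with
  | zero => simp [gegenbauer]
  | one => simp only [gegenbauer]; ring
  | more k ih ih' => simp only [gegenbauer, ih, ih']; ring

theorem total_smul (c : R) (p : R × R) : total (c • p) = c * total p := (mul_add c _ _).symm

theorem cosine_smul (c : R) (p : R × R) : cosine ε (c • p) = c * cosine ε p := by
  simp only [cosine, Prod.smul_fst, Prod.smul_snd, smul_eq_mul]
  ring

theorem projInner_smul (a b c : R) (p q r : R × R) :
    projInner ε (a • p) (b • q) (c • r) = a * b * c * projInner ε p q r := by
  simp only [projInner, total_smul, cosine_smul]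
  ring

theorem projNormSq_smul (a b c : R) (p q r : R × R) :
    projNormSq (a • p) (b • q) (c • r) = (a * b * c) ^ 2 * projNormSq p q r := by
  simp only [projNormSq, total_smul, sineSq, Prod.smul_fst, Prod.smul_snd, smul_eq_mul]
  ring

/-- All parts of `threePoint` have the same degree in all three pairs of variables. -/
def IsHomogeneousKernel : List (ℕ × List (List ℤ)) → Prop
  | [] => True
  | (_, rows) :: D => IsTriangular D.length rows ∧ IsHomogeneousKernel D

instance : ∀ D : List (ℕ × List (List ℤ)), Decidable (IsHomogeneousKernel D)
  | [] => isTrue trivial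
  | (_, _) :: D =>
    have := instDecidableIsHomogeneousKernel D
    inferInstanceAs (Decidable (_ ∧ _))

theorem threePoint_smul (d : ℕ) (a b c : R) (p q r : R × R) {k N : ℕ}
    {D : List (ℕ × List (List ℤ))} (hD : IsHomogeneousKernel D) (hN : k + D.length = N + 1) :
    threePoint d ε (a • p) (b • q) (c • r) k D
      = (a * b * c) ^ N * threePoint d ε p q r k D := by
  induction D generalizing k with
  | nil => exact (mul_zero _).symm
  | cons e D ih =>
    obtain rfl : k + D.length = N := Nat.succ_injective hN
    rw [threePoint, threePoint, gramKernel_smul ε a b p q hD.1, total_smul, projInner_smul,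
      projNormSq_smul, gegenbauer_mul, ih hD.2 (add_right_comm ..)]
    ring

theorem twoPoint_smul (d : ℕ) (c : R) (p : R × R) {k N : ℕ} {L : List ℕ}
    (hN : k + L.length = N + 1) :
    twoPoint d ε (c • p) k L = c ^ N * twoPoint d ε p k L := by
  induction L generalizing k with
  | nil => exact (mul_zero _).symm
  | cons a L ih =>
    obtain rfl : k + L.length = N := Nat.succ_injective hN
    rw [twoPoint, twoPoint, total_smul, cosine_smul, mul_pow c _ 2, mul_left_comm,
      gegenbauer_mul, ih (add_right_comm ..)]
    ring

theorem gramDet_smul (a b c : R) (p q r : R × R) :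
    gramDet ε (a • p) (b • q) (c • r) = (a * b * c) ^ 2 * gramDet ε p q r := by
  simp only [gramDet, total_smul, cosine_smul]
  ring

end Homogeneity

section Forms

variable (d : ℕ) {N : ℕ} {D : List (ℕ × List (List ℤ))}

/-- The contribution of three distinct points to the three-point kernel. -/
def tripleForm (hD : IsHomogeneousKernel D) (hN : D.length = N + 1) : NaturalForm 3 N where
  eval ε p := threePoint d ε (p 0) (p 1) (p 2) 0 D + threePoint d ε (p 0) (p 2) (p 1) 0 D
    + threePoint d ε (p 1) (p 2) (p 0) 0 D
  map_eval φ ε p := by simp only [map_add, map_threePoint]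
  eval_smul ε c p := by
    simp only [threePoint_smul ε d _ _ _ _ _ _ hD ((zero_add _).trans hN), Fin.prod_univ_three]
    ring

/-- The contribution of two distinct points to the three-point kernel and to the two-point kernel.
The pair `(ε, 4)` represents the cosine `1`. -/
def pairForm (hD : IsHomogeneousKernel D) (hN : D.length = N + 1) {L : List ℕ}
    (hL : L.length = N + 1) : NaturalForm 1 (2 * N) where
  eval ε p := 3 ^ N * (threePoint d ε (p 0) (p 0) (ε, 4) 0 D
    + 2 * threePoint d ε (p 0) (ε, 4) (p 0) 0 D) + total (p 0) ^ N * twoPoint (d + 1) ε (p 0) 0 L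
  map_eval φ ε p := by
    simp only [map_add, map_mul, map_pow, map_ofNat, map_threePoint, map_twoPoint, map_total,
      Prod.map_apply]
  eval_smul {R} _ ε c p := by
    have smul₁ (q r s : R × R) := threePoint_smul ε d (c 0) (c 0) 1 q r s hD ((zero_add _).trans hN)
    have smul₂ (q r s : R × R) := threePoint_smul ε d (c 0) 1 (c 0) q r s hD ((zero_add _).trans hN)
    simp only [one_smul] at smul₁ smul₂
    simp only [smul₁, smul₂, twoPoint_smul ε (d + 1) _ _ ((zero_add _).trans hL), total_smul,
      Fin.prod_univ_one]
    ring

/-- The Gram determinant of three points, scaled. -/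
def gramDetForm (m : ℕ) : NaturalForm 3 2 where
  eval ε p := m * gramDet ε (p 0) (p 1) (p 2)
  map_eval φ ε p := by simp only [map_mul, map_natCast, map_gramDet]
  eval_smul ε c p := by
    rw [gramDet_smul, Fin.prod_univ_three]
    ring

/-- The form `0`, as a void constraint. -/
def zeroForm (A n : ℕ) : NaturalForm A n where
  eval _ _ := 0
  map_eval φ _ _ := map_zero φ
  eval_smul _ _ _ := (mul_zero _).symm

end Forms

/-! ### The certificate -/

section Certificate

/-- The Bachoc–Vallentin kernel for the kissing number in dimension `14`: triangular factors of the
positive semidefinite matrices in a rounded numerical solution of the semidefinite program. -/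
def kernelFactors : List (ℕ × List (List ℤ)) := [
  (149, [
    [1870828, -39906021, 1987804750, -18051087574, 78121224149, -192599146636, 286488099764,
     -264934456104, 144478254988, -34826309377, -3434121788, 4568687763, -1154707510, -68184705,
     45121836, -981030, 3966],
    [121615584, -3487972891, 35349562687, -171627455451, 475759815692, -814040574778,
     885515781644, -600789968021, 230525555308, -34529195631, -7579013328, 4106591864,
     -617101643, 44429888, -430498, -26066],
    [1288605677, -17612722196, 90936919971, -241555812198, 365618220741, -313387727748,
     135189927834, -12143863543, -13407390318, 4395841256, -8190313, -119180047, 17013428,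
     -937461, 14087],
    [3599559355, -44309629795, 208007393329, -495623461949, 662367605480, -504648235938,
     203011168321, -26566543630, -9072596362, 3623967676, -404341972, 6710421, 699661, 38495],
    [10622841677, -57854960862, 139166514272, -183137752781, 126711509543, -38933245567,
     -925994257, 3463255506, -555190563, -53551173, 67908, 1382981, 85491],
    [8693402691, -44246827876, 94408531164, -109236732187, 69144414207, -21334861126, 960368828,
     1279897299, -344649871, 31440740, -291272, 8737],
    [10302894292, -35658253454, 53348072585, -42752281409, 16813763967, -2568433969, -468289955,
     297051637, -54129708, 1766911, 80693],
    [2446422463, -5442679053, 4562436286, -2101781899, 269813978, 120444954, -29860325, 2503734,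
     -208711, 911],
    [1514725026, -3319890201, 2336291235, -595504725, -44133478, 48998398, -6154587, 212580,
     -2626],
    [496334023, -544070791, 210826410, -13321345, -15043366, 2591043, -102691, -1610],
    [268416142, -200092057, 31492330, 6539898, -3571977, 236224, 756],
    [109809567, -62982801, -1504106, 4494950, -237377, -7958],
    [10855649, -2964963, -1214643, 84657, 5131],
    [3526264, 735878, -93317, -9947],
    [512890, 100041, -5408],
    [7809, 346],
    [61]]),
  (140, [
    [25827508, -1683569792, 34403748753, -265639045407, 1025954797381, -2222100340098,
     2805163791018, -1976897584045, 558218798297, 185187700773, -205771173179, 69808437861,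
     -11180654390, 767037369, -17492667, 48339],
    [805552326, -14632889221, 112140165450, -404307559024, 813306883942, -1029700434297,
     901320556624, -589827805214, 277183110930, -88769463011, 16161105165, -1569869090, 6400544,
     6911251, 300015],
    [8875076005, -95798768528, 473896347902, -1343372329862, 2352805544501, -2643028172017,
     1884819674004, -843369640675, 239756872588, -44140533226, 5670905765, -390873634, -4066618,
     -195085],
    [46510169616, -457776013987, 1795718849259, -3764081428667, 4661755554680, -3558792029944,
     1702138038032, -505660304097, 89648624999, -8687138018, 288504204, 5796583, -64773],
    [38342111185, -188835672783, 396913488490, -442704513580, 278067005308, -112023069216,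
     39896659581, -12305274341, 3091051831, -420725264, 6536218, 221787],
    [82439011022, -393470060436, 817044628866, -956893355233, 651821901546, -261491573708,
     60251441014, -7112978920, 430250605, -2508556, -295498],
    [81182152023, -300843808455, 446730105530, -356496044131, 155579494527, -36068326004,
     3790116201, -58450181, 1570004, -283572],
    [38254562171, -137374945031, 180424530809, -118263937276, 42419721857, -7144332597,
     275216318, 15152247, -54065],
    [18100411634, -32796991866, 22755072779, -7394535446, 1018062824, -67429847, -4141487, 203334],
    [4807481202, -8643838085, 5209017385, -1422760406, 122198251, 2129763, 39956],
    [4206950862, -2636287550, 1063615715, -207238704, 4936142, 59834],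
    [999167970, -317820755, 1213168, -3783416, 59373],
    [240055337, -123043036, 11776861, 19749],
    [20014414, -1299313, -25600],
    [1815437, -15364],
    [24094]]),
  (131, [
    [511239729, -20349575504, 267805229966, -1553212359325, 4813093811245, -8768550071943,
     9742088546456, -6558919659121, 2417223014012, -298071247783, -92134332299, 35491752109,
     -3673867027, 79708940, -1762941],
    [8206195554, -140799425822, 866046084735, -2786659129785, 5243220503377, -6176809792573,
     4621727313331, -2188575265502, 622284891987, -96486354338, 8571128505, -1100061843,
     82430077, -1166240],
    [28626320461, -379909406903, 2059825196078, -5525573723968, 8357880396581, -7474112404031,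
     3971135516819, -1252501022415, 228212639173, -24808442204, 1951802146, -36450278, -3498621],
    [159411194623, -1181734995231, 3657422935461, -6003649228957, 5567028100885, -2901540637734,
     779312209234, -62580602747, -15796583576, 3343068251, -154464870, -1552278],
    [210763555111, -1087370229987, 2419024513541, -2945263089411, 2086760958789, -868496245729,
     195307991500, -18052265649, 789866333, -90924106, 226684],
    [377313245519, -1530837514714, 2697926134769, -2522252147467, 1300682534117, -371727718392,
     54931517412, -3067568740, 4849965, -2462859],
    [253680216731, -708149452429, 812857485656, -499145472248, 166944148972, -30766599578,
     2027659173, 90191501, -2620109],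
    [37901816821, -65029368900, 45629347181, -31620864072, 9785845106, -1498235659, 59586761,
     2294709],
    [37186948237, -57539853449, 20406080408, -3298915533, -76934243, 18540890, 2201560],
    [4477865830, -1840890919, 321202357, 128675570, -27891201, 44669],
    [6414091644, -3576386077, 714768031, -41460919, -491799],
    [643561790, -80472798, -5812269, -110298],
    [144658721, -30732045, 62095],
    [9651689, -62322],
    [320311]]),
  (123, [
    [3514687929, -108820322452, 1089185606813, -5108692302232, 13233744128676, -20547182460007,
     19984523861847, -12264711434677, 4589955391488, -963993142766, 91601610606, -1433656128,
     -283813481, -654846],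
    [18408771295, -319599468821, 2121947889851, -7132902944989, 13463529453799, -14871217281451,
     9732115693009, -3770954903159, 834311065305, -99745601189, 6726518755, -447483334, -2913956],
    [86086996081, -883938341787, 3561563032646, -7649523017058, 9705736026189, -7495322040990,
     3477969124630, -946390889744, 142413116263, -10039440850, 40172416, 10969574],
    [426180529087, -2685186096568, 6830534856455, -9171330426159, 6980381683663, -3116385203902,
     839072978144, -128326308311, 10896660390, -322133466, 8072806],
    [521495415808, -2189084112232, 3955308611447, -3780103208478, 2021886191790, -577674197752,
     65161732053, 2197378039, -211141077, -9524393],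
    [495606538695, -1609022785800, 2342604821728, -1792435575308, 726399888680, -145091410054,
     11051070942, 67067999, -4339475],
    [203266078821, -483386529314, 510158805059, -274528341599, 69377326539, -7555788405,
     237176336, 8065154],
    [166075525282, -296192660014, 192431002099, -58534803662, 5577133265, -16308714, 14999557],
    [82363151422, -52478949764, 17758169627, -2820215634, -105081659, 3975607],
    [13383063628, 1389304914, -643182388, -148452384, -7861088],
    [9947100872, -2997879052, 197783129, -5147085],
    [160161087, -8310388, 174292],
    [29520386, -162395],
    [1497905]]),
  (114, [
    [21916682359, -488881518539, 3895290666489, -15213447305325, 32908435138013, -42409085573156,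
     33725299174799, -16395418185781, 4590807941850, -648358384716, 36066634435, -340115741,
     30132759],
    [70079770943, -945593687700, 5426003313256, -16240546079357, 27083222182752, -26013451975450,
     14557122327105, -4705521330373, 809987249926, -56780782996, 231232071, 40382342],
    [187010498642, -1770264168956, 5910552629360, -9909056421137, 9167035730098, -4638798371462,
     1188034005586, -134598129035, 4966576105, -490669978, 74730792],
    [230519704480, -1124162801386, 2727627063732, -3745836544274, 3027369506337, -1321978271030,
     284061464837, -12596018947, -1474113559, -20326456],
    [765097445703, -2977477913222, 4995729356134, -4306133908854, 2029552738083, -521833791739,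
     64855068915, -3086898493, -18115977],
    [602026454353, -1736659993880, 2068412689469, -1186949315574, 308747124811, -34755976870,
     559471988, 31932700],
    [161457957307, -198249259848, 43787767383, -5611101719, -5320345451, 315797488, 45731211],
    [57087314268, -66855040649, 25184861718, -2762168134, -87972443, 7788652],
    [15928761424, -9678433769, 3385830139, -313449185, -4445502],
    [3203437423, -1376018184, 155102533, -5800385],
    [268309742, -62829132, -1447033],
    [40078046, 3576091],
    [1093207]]),
  (105, [
    [79894849710, -1295242888730, 8062359645886, -25037162157861, 42983147729731,
     -43625846104754, 27019445523140, -9957889685750, 1992101578025, -178073731475, 5919830243,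
     -21704002],
    [344017031887, -3597446161518, 14828847005044, -31207460712548, 36691067324175,
     -24331054363747, 8902029934183, -1658158597986, 132265822368, -2997305944, 32926355],
    [584187845533, -3558360605217, 9112902858643, -12073041715111, 9207600231752, -3861242081768,
     854421845490, -91504283777, 6730350072, -10403938],
    [1330238658547, -6066592995667, 10900249356018, -9962196944344, 5157952802737,
     -1429367186235, 169289053453, -957743498, -292981487],
    [961477425418, -2982597200668, 3558861252096, -1936099608402, 501233970851, -56232413293,
     1332718156, -127217996],
    [541225448927, -1572625716466, 1593101010013, -646177014490, 116899522924, -6431133960,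
     -66244666],
    [76927891398, -138474175011, 80223536004, -19332336644, 1489180920, 23003413],
    [40768437819, -31492795283, 10563383839, -933657365, -5127673],
    [10581493469, -4424928653, 770316822, -1891539],
    [1227344965, -58681118, 14696863],
    [96071504, 7335396],
    [2117158]]),
  (95, [
    [261937867897, -3617706368418, 19311742113802, -50864923639633, 73456692961151,
     -61293635891804, 29183093347857, -7455157837300, 863399173095, -34654225953, -460022449],
    [635639881577, -5617380187049, 18964995858316, -32458155762091, 30882130599545,
     -16612969008177, 4786689504507, -655814773728, 28390677292, -26198792],
    [704630994611, -1977550433488, 1607278730983, 83174141089, -569842042855, 475013714420,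
     -111703449364, 4384668191, -513244314],
    [1037796863326, -3304075342297, 2854611907791, -64123837547, -753604239121, 228395689137,
     -18394635700, -261911493],
    [142756821149, -437982462712, 593380223336, -342666048471, 85189269147, -6693745504, 11283942],
    [270948038988, -435580789571, 270208454499, -57421178999, 3668079187, 7505604],
    [50340706679, -53700942393, 20172329826, -2003934033, 11767575],
    [10375013109, -6020203844, 1333522525, 16795988],
    [2741328333, -488139736, 11321507],
    [80404503, 5467357],
    [3324428]]),
  (86, [
    [302298709530, -3509072341558, 14975408244882, -32468528744660, 38843828188855,
     -25415275881467, 8421901853797, -1168659083159, 37327133985, 190308904],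
    [1228968028871, -5097314307827, 8004093373996, -6744446949842, 2784039599956, -233143281973,
     -277922445565, 37904975266, -1191424489],
    [282733043953, -1292516233041, 2150857593258, -1725905901620, 680222345821, -130121024645,
     7570735715, -90669606],
    [89745881130, -255393871316, 230781593033, -57619965872, -8545773062, 3450019117, 226358],
    [78829616525, -209773607843, 203926029556, -78211646064, 10445927095, 8672152],
    [51060664053, -59452718784, 29315288918, -3725783425, 34803681],
    [4342980491, -3016128957, 621082707, 3190635],
    [729368982, -156182529, 2667263],
    [75813329, 2274266],
    [3067753]]),
  (77, [
    [36953783412, -287911898731, 845279973099, -1225031491429, 947808491089, -390487090890,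
     79185204419, -6163070182, 3599764],
    [23764050887, -146106471376, 323758574106, -335266480518, 172512890927, -41982729136,
     3804146077, 2435031],
    [22137910654, -81730139003, 108554771407, -65645596764, 18055112779, -1840413060, -8881],
    [17578528099, -47530125387, 42125339263, -14750119911, 1772429157, -2699521],
    [6451605618, -11331436451, 5877165281, -862763113, -4944446],
    [2422776715, -2380731646, 510615923, -1649932],
    [536728524, -164112564, 5780414],
    [71919663, -7309483],
    [7357694]]),
  (67, [
    [103864677596, -948562065410, 621382571003, 895893081404, -862030133284, 371374337583,
     -113857160383, 10511288887],
    [495733192765, 2095859317853, -5465572280221, 3715930828881, -1245029314277, 272888621330,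
     -20746252807],
    [258921548434, -537861721844, 367289638851, -117772626715, 20993919845, -1265425995],
    [27205733819, -46285344027, 21654614272, -2382065243, -127773705],
    [7458893801, -8414603062, 1960718786, -24510200],
    [1857908368, -1030178026, 89825665],
    [237016934, -51076814],
    [25524761]]),
  (58, [
    [36254289527, -178623222230, 308620430154, -234003918550, 77994803056, -9227851080, 12375929],
    [34483979899, -112449393663, 123507466143, -54115273171, 7814465225, -5786041],
    [22337053427, -45422659219, 27325276445, -4635546986, -482867],
    [10615678133, -11115169866, 2278446355, 5761661],
    [2070231951, -941854397, 37351795],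
    [430324130, -111895186],
    [58723375]]),
  (48, [
    [59145173898, -206380342290, 242243851218, -111782409553, 16792092732, -98541789],
    [39447757056, -88007374430, 57652207588, -10452579098, 9110120],
    [16710342011, -16218433704, 3354391397, -113883818],
    [4919216874, -1998111927, 6445419],
    [1628096999, -471664778],
    [301885320]]),
  (39, [
    [44917550955, -108457271615, 75370127742, -15204064909, 308368937],
    [17370803779, -21380694530, 6459987523, -437982391],
    [7467588433, -5609318302, 933179739],
    [3346231128, -779362791],
    [554982513]]),
  (29, [
    [43194636813, -68987878091, 30384084257, -3656807003],
    [19657455296, -19584885654, 3845888907],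
    [5384078828, -1629280396],
    [1014524627]]),
  (19, [
    [47333518342, -51547835922, 11045551010],
    [11147683181, -4400308068],
    [2096661842]]),
  (9, [
    [27511567400, -12777282181],
    [5218089856]]),
  (0, [
    [9720495429]])]

/-- The Delsarte coefficients in the same solution of the semidefinite program. -/
def twoPointCoeffs : List ℕ := [
  0,
  4820128472400211068712690966073211987748645288858468810486215344128,
  149456612224430616290946545038162974326110855889865102513565335552,
  768359083017294342334110827101334625219925212499079732704464338944,
  1157172180552067287328912925398689133483408413268745941764014080,
  741786873507324361484263924668235474781222728967849965539819520,
  1841548935981804850284685207487873798174283480052222130126848,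
  86174957013726451123707980623450534286062645974795187912704,
  217374242083942750537424412437328618773731485633260552192,
  1550843597796350346319205637461437579718254613311258624,
  41428366245995799095388245438576041298483299716431872,
  2952613891925982018385976810654932716642444798590976,
  86543646198925788827957611952210361765307975991296,
  893408621202952826845351493987260547215453585408,
  11329141982421428118179123766586104773487886336,
  255416247674839449636428002406294963437436928,
  6559591285663031922202522616092749083967488]

/-- The bound on the contribution of three distinct points is `-tripleMargin * 3 ^ 48`. -/
def tripleMargin : ℕ := 556129836047910131733661839150682557440501156413440000

/-- The bound on the contribution of two distinct points is `pairBound * 3 ^ 16`. -/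
def pairBound : ℕ := 1079734414371010838898346471688065979602751684626906496812947333851984286

theorem isHomogeneousKernel_kernelFactors : IsHomogeneousKernel kernelFactors := by decide +kernel

/-- The contribution of three distinct points. -/
def tripleObjective : NaturalForm 3 16 := tripleForm 11 isHomogeneousKernel_kernelFactors rfl

/-- The format for `tripleObjective`, to be shown to be at most `-tripleMargin`. -/
def tripleFormat : Format where
  width := 330
  degree := 16
  norm := 2 ^ 262
  threshold := 2 ^ 262 + tripleMargin

/-- The format for `gramDetForm (2 ^ 40)`, where it is at most `-1`. -/
def gramDetFormat : Format where
  width := 70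
  degree := 2
  norm := 2 ^ 50
  threshold := 2 ^ 50 + 1

/-- The root of the subdivision for three distinct points. -/
def tripleCell : Cell 3 :=
  rootCell (F := tripleFormat) (G := gramDetFormat) tripleObjective (gramDetForm (2 ^ 40))

/-- The contribution of two distinct points. -/
def pairObjective : NaturalForm 1 32 :=
  pairForm (N := 16) (L := twoPointCoeffs) 11 isHomogeneousKernel_kernelFactors rfl rfl

/-- The format for `pairObjective`, to be shown to be at most `pairBound`. -/
def pairFormat : Format where
  width := 373
  degree := 32
  norm := 2 ^ 306
  threshold := 2 ^ 306 - pairBound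

/-- The format for `zeroForm`, which is never at most `-1`. -/
def voidFormat : Format where
  width := 1
  degree := 0
  norm := 0
  threshold := 1

theorem fits_tripleFormat : tripleFormat.Fits 3 := by constructor <;> decide +kernel

theorem fits_gramDetFormat : gramDetFormat.Fits 3 := by constructor <;> decide +kernel

theorem fits_pairFormat : pairFormat.Fits 1 := by constructor <;> decide +kernel

theorem fits_voidFormat : voidFormat.Fits 1 := by constructor <;> decide +kernel

theorem tripleObjective_norm_le :
    tripleObjective.eval 1 (fun _ => (1, 1)) ≤ tripleFormat.norm := by decide +kernel

theorem gramDetForm_norm_le :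
    (gramDetForm (2 ^ 40)).eval 1 (fun _ => (1, 1)) ≤ gramDetFormat.norm := by decide +kernel

theorem pairObjective_norm_le :
    pairObjective.eval 1 (fun _ => (1, 1)) ≤ pairFormat.norm := by decide +kernel

-- The upper half needs most of the subdivision; it is split to bound the memory for each part.
theorem certify_tripleCell : tripleCell.certify tripleFormat gramDetFormat
    [0, 1, 2, 0, 1, 2, 0, 1, 2, 0, 1, 2, 0, 1, 2, 0, 1, 2, 0, 1, 2, 0] :=
  Cell.certify_cons (by decide +kernel) <| Cell.certify_cons
    (Cell.certify_cons (Cell.certify_cons (by decide +kernel) (by decide +kernel))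
      (by decide +kernel))
    (Cell.certify_cons (by decide +kernel) (by decide +kernel))

theorem certify_pairCell : (rootCell (F := pairFormat) (G := voidFormat) pairObjective
    (zeroForm 1 0)).certify pairFormat voidFormat (List.replicate 6 0) := by decide +kernel

end Certificate

section Symmetry

variable {R : Type*} [CommSemiring R] (ε : R)

theorem gramKernel_comm (p q : R × R) (rows : List (List ℤ)) :
    gramKernel ε p q rows = gramKernel ε q p rows := by
  induction rows with
  | nil => rfl
  | cons l rows ih => rw [gramKernel, gramKernel, ih, mul_comm p.2, mul_comm (binaryForm ε p l)]

theorem projInner_comm (p q r : R × R) : projInner ε p q r = projInner ε q p r := by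
  simp only [projInner]
  ring

theorem projNormSq_comm (p q r : R × R) : projNormSq p q r = projNormSq q p r := by
  simp only [projNormSq]
  ring

theorem threePoint_comm (d : ℕ) (p q r : R × R) (k : ℕ) (D : List (ℕ × List (List ℤ))) :
    threePoint d ε p q r k D = threePoint d ε q p r k D := by
  induction D generalizing k with
  | nil => rfl
  | cons e D ih =>
    rw [threePoint, threePoint, ih, gramKernel_comm, projInner_comm, projNormSq_comm]

end Symmetry

section Cosines

/-- The pair that represents the cosine `u`. The interval `[-1, 1 / 2]` of cosines becomes the
interval `[0, 3]` for the second component. -/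
def pairOfCosine (u : ℝ) : ℝ × ℝ := (1 - 2 * u, 2 + 2 * u)

variable (u v t : ℝ)

theorem total_pairOfCosine : total (pairOfCosine u) = 3 := by
  rw [total, pairOfCosine]
  ring

theorem cosine_pairOfCosine : cosine (-1) (pairOfCosine u) = 6 * u := by
  rw [cosine, pairOfCosine]
  ring

theorem projInner_pairOfCosine :
    projInner (-1) (pairOfCosine u) (pairOfCosine v) (pairOfCosine t) = 108 * (t - u * v) := by
  simp only [projInner, total_pairOfCosine, cosine_pairOfCosine]
  ring

theorem projNormSq_pairOfCosine :
    projNormSq (pairOfCosine u) (pairOfCosine v) (pairOfCosine t)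
      = 108 ^ 2 * ((1 - u ^ 2) * (1 - v ^ 2)) := by
  rw [projNormSq, total_pairOfCosine]
  simp only [sineSq, pairOfCosine]
  ring

theorem gramDet_pairOfCosine :
    gramDet (-1) (pairOfCosine u) (pairOfCosine v) (pairOfCosine t)
      = 4 * 3 ^ 6 * (1 + 2 * u * v * t - u ^ 2 - v ^ 2 - t ^ 2) := by
  simp only [gramDet, total_pairOfCosine, cosine_pairOfCosine]
  ring

theorem pairOfCosine_eq : pairOfCosine u = (3 - (2 + 2 * u), 2 + 2 * u) := by
  rw [pairOfCosine]
  congr 1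
  ring

theorem pairOfCosine_one : pairOfCosine 1 = (-1, 4) := by norm_num [pairOfCosine]

end Cosines

section Bounds

open Set

/-- The three-point kernel of the certificate as a function of the cosines. -/
def tripleKernel (u v t : ℝ) : ℝ :=
  threePoint 11 (-1) (pairOfCosine u) (pairOfCosine v) (pairOfCosine t) 0 kernelFactors

/-- The two-point kernel of the certificate as a function of the cosine. -/
def pairKernel (u : ℝ) : ℝ := twoPoint 12 (-1) (pairOfCosine u) 0 twoPointCoeffs

theorem tripleKernel_comm (u v t : ℝ) : tripleKernel u v t = tripleKernel v u t :=
  threePoint_comm ..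

theorem tripleKernel_add_le_of_le {u v t : ℝ} (hu : u ≤ 1 / 2) (hvu : v ≤ u) (htv : t ≤ v)
    (ht : -1 ≤ t) (hdet : 0 ≤ 1 + 2 * u * v * t - u ^ 2 - v ^ 2 - t ^ 2) :
    tripleKernel u v t + tripleKernel u t v + tripleKernel v t u ≤ -(tripleMargin * 3 ^ 48) := by
  have sorted : Antitone ![2 + 2 * u, 2 + 2 * v, 2 + 2 * t] := by
    simp [Fin.antitone_iff_succ_le, Fin.forall_fin_succ, hvu, htv]
  have lower (a) : 0 ≤ ![2 + 2 * u, 2 + 2 * v, 2 + 2 * t] a := by fin_cases a <;> dsimp <;> linarith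
  have upper (a) : ![2 + 2 * u, 2 + 2 * v, 2 + 2 * t] a ≤ 3 := by fin_cases a <;> dsimp <;> linarith
  have bound := NaturalForm.eval_le_of_certify (F := tripleFormat) (G := gramDetFormat)
    tripleObjective (gramDetForm (2 ^ 40)) fits_tripleFormat fits_gramDetFormat
    tripleObjective_norm_le gramDetForm_norm_le certify_tripleCell sorted lower upper
  simp only [tripleObjective, tripleForm, gramDetForm, tripleFormat, gramDetFormat,
    Matrix.cons_val_zero, Matrix.cons_val_one, Matrix.cons_val, ← pairOfCosine_eq,
    gramDet_pairOfCosine, Nat.cast_add, sub_add_cancel_left, neg_mul] at bound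
  exact bound (by push_cast; linarith)

theorem tripleKernel_add_le {u v t : ℝ} (hu : u ∈ Icc (-1) (1 / 2)) (hv : v ∈ Icc (-1) (1 / 2))
    (ht : t ∈ Icc (-1) (1 / 2)) (hdet : 0 ≤ 1 + 2 * u * v * t - u ^ 2 - v ^ 2 - t ^ 2) :
    tripleKernel u v t + tripleKernel u t v + tripleKernel v t u ≤ -(tripleMargin * 3 ^ 48) := by
  have huv := tripleKernel_comm u v t
  have hut := tripleKernel_comm u t v
  have hvt := tripleKernel_comm v t u
  rcases le_total v u with hvu | huv'
  · rcases le_total t v with htv | hvt'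
    · exact tripleKernel_add_le_of_le hu.2 hvu htv ht.1 hdet
    rcases le_total t u with htu | hut'
    · linarith [tripleKernel_add_le_of_le hu.2 htu hvt' hv.1 (by linarith)]
    · linarith [tripleKernel_add_le_of_le ht.2 hut' hvu hv.1 (by linarith)]
  · rcases le_total t u with htu | hut'
    · linarith [tripleKernel_add_le_of_le hv.2 huv' htu ht.1 (by linarith)]
    rcases le_total t v with htv | hvt'
    · linarith [tripleKernel_add_le_of_le hv.2 htv hut' hu.1 (by linarith)]
    · linarith [tripleKernel_add_le_of_le ht.2 hvt' huv' hu.1 (by linarith)]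

theorem tripleKernel_add_pairKernel_le {u : ℝ} (hu : u ∈ Icc (-1) (1 / 2)) :
    tripleKernel u u 1 + 2 * tripleKernel u 1 u + pairKernel u ≤ pairBound * 3 ^ 16 := by
  have bound := NaturalForm.eval_le_of_certify (F := pairFormat) (G := voidFormat) pairObjective
    (zeroForm 1 0) fits_pairFormat fits_voidFormat pairObjective_norm_le (Nat.zero_le _)
    certify_pairCell (X := fun _ => 2 + 2 * u) antitone_const (fun _ => by linarith [hu.1])
    (fun _ => by linarith [hu.2]) (by norm_num [zeroForm, voidFormat])
  simp only [← pairOfCosine_eq, ← pairOfCosine_one, pairObjective, pairForm, total_pairOfCosine,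
    pairFormat] at bound
  rw [Nat.cast_sub (by decide +kernel)] at bound
  simp only [tripleKernel, pairKernel]
  norm_num at bound ⊢
  linarith

end Bounds

/-! ### Positivity of the kernels -/

section PositiveKernels

variable {ι : Type*} {s : Finset ι} {K K' : ι → ι → ℝ}

/-- The kernel `K` is positive semidefinite on the finite set `s`. Symmetry is not part of the
notion. -/
def IsPositiveKernel (s : Finset ι) (K : ι → ι → ℝ) : Prop :=
  ∀ c : ι → ℝ, 0 ≤ ∑ i ∈ s, ∑ j ∈ s, c i * c j * K i j

namespace IsPositiveKernel

theorem sum_nonneg (h : IsPositiveKernel s K) : 0 ≤ ∑ i ∈ s, ∑ j ∈ s, K i j := by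
  simpa using h 1

theorem congr (h : IsPositiveKernel s K) (heq : ∀ i ∈ s, ∀ j ∈ s, K i j = K' i j) :
    IsPositiveKernel s K' := fun c =>
  (h c).trans_eq <| Finset.sum_congr rfl fun i hi => Finset.sum_congr rfl fun j hj => by
    rw [heq i hi j hj]

theorem zero : IsPositiveKernel s fun _ _ => 0 := fun c => by simp

theorem add (h : IsPositiveKernel s K) (h' : IsPositiveKernel s K') :
    IsPositiveKernel s fun i j => K i j + K' i j := fun c => by
  simpa only [mul_add, Finset.sum_add_distrib] using add_nonneg (h c) (h' c)

theorem const_mul (h : IsPositiveKernel s K) {a : ℝ} (ha : 0 ≤ a) :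
    IsPositiveKernel s fun i j => a * K i j := fun c => by
  simpa only [mul_left_comm _ a, ← Finset.mul_sum] using mul_nonneg ha (h c)

theorem weighted (h : IsPositiveKernel s K) (g : ι → ℝ) :
    IsPositiveKernel s fun i j => g i * g j * K i j := fun c =>
  (h fun i => c i * g i).trans_eq <|
    Finset.sum_congr rfl fun i _ => Finset.sum_congr rfl fun j _ => by ring

theorem gramKernel_mul (h : IsPositiveKernel s K) (ε : ℝ) (p : ι → ℝ × ℝ)
    (rows : List (List ℤ)) :
    IsPositiveKernel s fun i j => gramKernel ε (p i) (p j) rows * K i j := by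
  induction rows with
  | nil => simpa only [gramKernel, zero_mul] using zero
  | cons l rows ih =>
    refine ((h.weighted fun i => binaryForm ε (p i) l).add (ih.weighted fun i => (p i).2)).congr
      fun i _ j _ => ?_
    rw [gramKernel]
    ring

end IsPositiveKernel

end PositiveKernels

section FischerProduct

open MvPolynomial
open scoped Nat

variable {σ : Type*} [Fintype σ]

/-- The Fischer inner product on real polynomials. It makes the monomials orthogonal and the
multiplication by a variable adjoint to the partial derivative. -/
noncomputable def fischer : MvPolynomial σ ℝ →ₗ[ℝ] MvPolynomial σ ℝ →ₗ[ℝ] ℝ :=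
  (basisMonomials σ ℝ).constr ℝ fun α => (∏ i, ((α i)! : ℝ)) • lcoeff ℝ α

theorem fischer_monomial (α : σ →₀ ℕ) (a : ℝ) (q : MvPolynomial σ ℝ) :
    fischer (monomial α a) q = a * ((∏ i, ((α i)! : ℝ)) * coeff α q) := by
  have h := (basisMonomials σ ℝ).constr_basis ℝ (fun α => (∏ i, ((α i)! : ℝ)) • lcoeff ℝ α) α
  rw [coe_basisMonomials] at h
  rw [← mul_one a, ← smul_eq_mul a 1, ← smul_monomial, map_smul, fischer, h]
  simp

theorem prod_factorial_add_single (α : σ →₀ ℕ) (i : σ) :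
    ∏ j, ((α + Finsupp.single i 1 : σ →₀ ℕ) j)! = (α i + 1) * ∏ j, (α j)! := by
  classical
  rw [← Finset.mul_prod_erase _ _ (Finset.mem_univ i),
    ← Finset.mul_prod_erase _ (fun j => (α j)!) (Finset.mem_univ i), ← mul_assoc]
  congr 1
  · simp [Nat.factorial_succ]
  · refine Finset.prod_congr rfl fun j hj => ?_
    simp [Finsupp.single_eq_of_ne (Finset.ne_of_mem_erase hj)]

theorem fischer_X_mul (i : σ) (p q : MvPolynomial σ ℝ) :
    fischer (X i * p) q = fischer p (pderiv i q) := by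
  induction p using MvPolynomial.induction_on' with
  | monomial α a =>
    rw [mul_comm, X, monomial_mul, mul_one, fischer_monomial, fischer_monomial, coeff_pderiv]
    have h := prod_factorial_add_single α i
    simp only [← @Nat.cast_inj ℝ, Nat.cast_mul, Nat.cast_prod, Nat.cast_add, Nat.cast_one] at h
    rw [h]
    ring
  | add p p' hp hp' => simp only [mul_add, map_add, LinearMap.add_apply, hp, hp']

theorem fischer_self_nonneg (p : MvPolynomial σ ℝ) : 0 ≤ fischer p p := by
  calc 0 ≤ ∑ α ∈ p.support, (∏ i, ((α i)! : ℝ)) * coeff α p ^ 2 := by positivity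
    _ = fischer (∑ α ∈ p.support, monomial α (coeff α p)) p := by
      rw [map_sum, LinearMap.sum_apply]
      refine Finset.sum_congr rfl fun α _ => ?_
      rw [fischer_monomial]
      ring
    _ = fischer p p := by rw [← p.as_sum]

/-- The linear form `x ↦ ⟪z, x⟫`. -/
noncomputable def linearForm (z : EuclideanSpace ℝ σ) : MvPolynomial σ ℝ := ∑ i, C (z i) * X i

/-- The quadratic form `x ↦ ‖x‖ ^ 2`. -/
noncomputable def normSqForm : MvPolynomial σ ℝ := ∑ i, X i ^ 2

/-- The derivative in the direction of `z`. -/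
noncomputable def directionalDeriv (z : EuclideanSpace ℝ σ) :
    Derivation ℝ (MvPolynomial σ ℝ) (MvPolynomial σ ℝ) :=
  ∑ i, z i • pderiv i

/-- The Laplace operator on polynomials. -/
noncomputable def laplacian : MvPolynomial σ ℝ →ₗ[ℝ] MvPolynomial σ ℝ :=
  ∑ i, (pderiv i).toLinearMap ∘ₗ (pderiv i).toLinearMap

variable (z : EuclideanSpace ℝ σ)

theorem directionalDeriv_apply (p : MvPolynomial σ ℝ) :
    directionalDeriv z p = ∑ i, C (z i) * pderiv i p := by
  rw [directionalDeriv, ← Derivation.coeFnAddMonoidHom_apply, map_sum, Finset.sum_apply]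
  simp [smul_eq_C_mul]

theorem laplacian_apply (p : MvPolynomial σ ℝ) : laplacian p = ∑ i, pderiv i (pderiv i p) := by
  simp [laplacian]

theorem fischer_linearForm_mul (p q : MvPolynomial σ ℝ) :
    fischer (linearForm z * p) q = fischer p (directionalDeriv z q) := by
  simp only [linearForm, directionalDeriv_apply, Finset.sum_mul, map_sum, LinearMap.sum_apply,
    ← smul_eq_C_mul, smul_mul_assoc, map_smul, LinearMap.smul_apply, fischer_X_mul]

theorem fischer_normSqForm_mul (p q : MvPolynomial σ ℝ) :
    fischer (normSqForm * p) q = fischer p (laplacian q) := by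
  simp only [normSqForm, laplacian_apply, Finset.sum_mul, map_sum, LinearMap.sum_apply, pow_two,
    mul_assoc, fischer_X_mul]

theorem pderiv_linearForm (i : σ) : pderiv i (linearForm z) = C (z i) := by
  classical
  simp [linearForm, pderiv_X, Pi.single_apply]

theorem pderiv_normSqForm (i : σ) : pderiv i (normSqForm : MvPolynomial σ ℝ) = 2 * X i := by
  classical
  simp [normSqForm, pderiv_X, Pi.single_apply]

theorem directionalDeriv_linearForm : directionalDeriv z (linearForm z) = C (‖z‖ ^ 2) := by
  rw [EuclideanSpace.real_norm_sq_eq, directionalDeriv_apply, map_sum]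
  simp only [pderiv_linearForm, ← map_mul, pow_two]

theorem directionalDeriv_normSqForm : directionalDeriv z normSqForm = 2 * linearForm z := by
  simp only [directionalDeriv_apply, pderiv_normSqForm, linearForm, Finset.mul_sum,
    mul_left_comm (2 : MvPolynomial σ ℝ)]

theorem laplacian_linearForm_mul (p : MvPolynomial σ ℝ) :
    laplacian (linearForm z * p) = 2 * directionalDeriv z p + linearForm z * laplacian p := by
  simp only [laplacian_apply, directionalDeriv_apply, Finset.mul_sum, ← Finset.sum_add_distrib]
  refine Finset.sum_congr rfl fun i _ => ?_
  simp only [pderiv_mul, map_add, pderiv_linearForm, pderiv_C]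
  ring

theorem laplacian_normSqForm_mul {p : MvPolynomial σ ℝ} {k : ℕ} (hp : p.IsHomogeneous k) :
    laplacian (normSqForm * p)
      = ((2 * Fintype.card σ + 4 * k : ℕ) : MvPolynomial σ ℝ) * p + normSqForm * laplacian p := by
  have second_deriv (i : σ) : pderiv i (pderiv i (normSqForm * p))
      = 2 * p + 4 * (X i * pderiv i p) + normSqForm * pderiv i (pderiv i p) := by
    have two : pderiv i (2 : MvPolynomial σ ℝ) = 0 := (pderiv i).map_natCast 2
    simp only [pderiv_mul, map_add, pderiv_normSqForm, two, pderiv_X_self]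
    ring
  simp only [laplacian_apply, second_deriv, Finset.sum_add_distrib, ← Finset.mul_sum,
    hp.sum_X_mul_pderiv, Finset.sum_const, Finset.card_univ, nsmul_eq_mul]
  push_cast
  ring

theorem isHomogeneous_linearForm : (linearForm z).IsHomogeneous 1 :=
  IsHomogeneous.sum _ _ _ fun i _ => isHomogeneous_C_mul_X (z i) i

theorem isHomogeneous_normSqForm : (normSqForm : MvPolynomial σ ℝ).IsHomogeneous 2 :=
  IsHomogeneous.sum _ _ _ fun i _ => isHomogeneous_X_pow i 2

theorem isHomogeneous_directionalDeriv {p : MvPolynomial σ ℝ} {k : ℕ}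
    (hp : p.IsHomogeneous (k + 1)) : (directionalDeriv z p).IsHomogeneous k := by
  rw [directionalDeriv_apply]
  exact IsHomogeneous.sum _ _ _ fun i _ => hp.pderiv.C_mul (z i)

theorem fischer_linearForm_pow {k : ℕ} {q : MvPolynomial σ ℝ} (hq : q.IsHomogeneous k) :
    fischer (linearForm z ^ k) q = k ! * eval z q := by
  induction k generalizing q with
  | zero =>
    rw [totalDegree_eq_zero_iff_eq_C.1 (Nat.le_zero.1 hq.totalDegree_le), pow_zero,
      show (1 : MvPolynomial σ ℝ) = monomial 0 1 from rfl, fischer_monomial]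
    simp
  | succ k ih =>
    have euler := congrArg (eval z) hq.sum_X_mul_pderiv
    rw [pow_succ', fischer_linearForm_mul, ih (isHomogeneous_directionalDeriv z hq),
      directionalDeriv_apply, Nat.factorial_succ]
    simp only [map_sum, map_mul, eval_X, eval_C, nsmul_eq_mul, map_natCast] at euler ⊢
    rw [euler]
    push_cast
    ring

end FischerProduct

section GegenbauerPositivity

theorem gegenbauer_succ {R : Type*} [CommSemiring R] (d : ℕ) (ε s w : R) (k : ℕ) :
    gegenbauer d ε s w (k + 1) = (2 * k + d : ℕ) * s * gegenbauer d ε s w k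
      + ε * (k * (k - 1 + d) : ℕ) * w * gegenbauer d ε s w (k - 1) := by
  cases k <;> simp [gegenbauer]

theorem derivation_gegenbauer {A : Type*} [CommRing A] [Algebra ℝ A] (D : Derivation ℝ A A) (d : ℕ)
    {s w : A} (hw : D w = 2 * s * D s) (k : ℕ) :
    D (gegenbauer d (-1) s w k) = (k * (k - 1 + d) : ℕ) * D s * gegenbauer d (-1) s w (k - 1) := by
  induction k using Nat.twoStepInduction with
  | zero => simp [gegenbauer]
  | one => simp [gegenbauer]
  | more k ih ih' =>
    have step := gegenbauer_succ d (-1) s w k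
    rw [Nat.add_sub_cancel] at ih'
    simp only [gegenbauer, map_add, Derivation.leibniz, D.map_natCast, D.map_neg, D.map_one_eq_zero,
      smul_eq_mul, ih, ih', hw, Nat.succ_sub_one]
    generalize ((k * (k - 1 + d) : ℕ) : A) = c at step ⊢
    push_cast at step ⊢
    linear_combination (-1 : A) * (k + 1) * (k + d) * D s * step

section Zonal

open MvPolynomial
open scoped Nat

variable {σ : Type*} [Fintype σ] (d : ℕ) (z : EuclideanSpace ℝ σ) (k : ℕ)

/-- A multiple of the zonal harmonic polynomial of degree `k` with pole `z`. -/
noncomputable def zonal : MvPolynomial σ ℝ :=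
  gegenbauer d (-1) (linearForm z) (C (‖z‖ ^ 2) * normSqForm) k

/-- The coefficient of `linearForm z ^ k` in `zonal d z k`. -/
def zonalLeadingCoeff : ℕ → ℕ
  | 0 => 1
  | k + 1 => (2 * k + d) * zonalLeadingCoeff k

theorem zonalLeadingCoeff_pos {d : ℕ} (hd : 0 < d) (k : ℕ) : 0 < zonalLeadingCoeff d k := by
  induction k with
  | zero => exact one_pos
  | succ k ih => exact Nat.mul_pos (by lia) ih

theorem eval_zonal (y z : EuclideanSpace ℝ σ) :
    eval z (zonal d y k) = gegenbauer d (-1) (inner ℝ y z) (‖y‖ ^ 2 * ‖z‖ ^ 2) k := by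
  rw [zonal, map_gegenbauer]
  simp [linearForm, normSqForm, EuclideanSpace.real_norm_sq_eq, PiLp.inner_apply, mul_comm]

theorem zonal_succ : zonal d z (k + 1)
    = ((2 * k + d : ℕ) : ℝ) • (linearForm z * zonal d z k)
      - (((k * (k - 1 + d) : ℕ) : ℝ) * ‖z‖ ^ 2) • (normSqForm * zonal d z (k - 1)) := by
  simp only [zonal, gegenbauer_succ, smul_eq_C_mul, map_mul, map_natCast]
  ring

theorem isHomogeneous_zonal : (zonal d z k).IsHomogeneous k := by
  induction k using Nat.twoStepInduction with
  | zero => exact isHomogeneous_one σ ℝ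
  | one => simpa [zonal, gegenbauer] using (isHomogeneous_linearForm z).C_mul d
  | more k ih ih' =>
    have linear := (isHomogeneous_linearForm z).mul ih'
    have quadratic := (isHomogeneous_normSqForm (σ := σ)).mul ih
    rw [add_comm 1] at linear
    rw [add_comm 2] at quadratic
    rw [zonal_succ, smul_eq_C_mul, smul_eq_C_mul]
    exact (linear.C_mul _).sub (quadratic.C_mul _)

theorem directionalDeriv_zonal : directionalDeriv z (zonal d z k)
    = (((k * (k - 1 + d) : ℕ) : ℝ) * ‖z‖ ^ 2) • zonal d z (k - 1) := by
  have hw : directionalDeriv z (C (‖z‖ ^ 2) * normSqForm)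
      = 2 * linearForm z * directionalDeriv z (linearForm z) := by
    rw [← smul_eq_C_mul, Derivation.map_smul, directionalDeriv_normSqForm,
      directionalDeriv_linearForm, smul_eq_C_mul]
    ring
  rw [zonal, derivation_gegenbauer _ d hw, directionalDeriv_linearForm, smul_eq_C_mul, map_mul,
    map_natCast, zonal]

theorem laplacian_zonal (hσ : Fintype.card σ = d + 2) : laplacian (zonal d z k) = 0 := by
  induction k using Nat.twoStepInduction with
  | zero => simp [zonal, gegenbauer, laplacian_apply]
  | one => simp [zonal, gegenbauer, laplacian_apply, pderiv_linearForm]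
  | more k ih ih' =>
    rw [zonal_succ, map_sub, map_smul, map_smul, laplacian_linearForm_mul, directionalDeriv_zonal,
      Nat.add_sub_cancel, laplacian_normSqForm_mul (isHomogeneous_zonal d z k), ih, ih', hσ]
    simp only [smul_eq_C_mul, map_mul, map_natCast]
    push_cast
    ring

theorem exists_zonal_eq : ∃ q,
    zonal d z k = (zonalLeadingCoeff d k : ℝ) • linearForm z ^ k + normSqForm * q := by
  induction k with
  | zero => exact ⟨0, by simp [zonal, gegenbauer, zonalLeadingCoeff]⟩
  | succ k ih =>
    obtain ⟨q, hq⟩ := ih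
    refine ⟨((2 * k + d : ℕ) : ℝ) • (linearForm z * q)
      - (((k * (k - 1 + d) : ℕ) : ℝ) * ‖z‖ ^ 2) • zonal d z (k - 1), ?_⟩
    rw [zonal_succ, hq, zonalLeadingCoeff, Nat.cast_mul (α := ℝ) (2 * k + d)]
    simp only [smul_eq_C_mul, map_mul]
    ring

theorem fischer_zonal (hσ : Fintype.card σ = d + 2) (y z : EuclideanSpace ℝ σ) :
    fischer (zonal d y k) (zonal d z k) = zonalLeadingCoeff d k * k !
      * gegenbauer d (-1) (inner ℝ y z) (‖y‖ ^ 2 * ‖z‖ ^ 2) k := by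
  obtain ⟨q, hq⟩ := exists_zonal_eq d y k
  rw [hq, map_add, LinearMap.add_apply, map_smul, LinearMap.smul_apply, fischer_normSqForm_mul,
    laplacian_zonal d z k hσ, fischer_linearForm_pow y (isHomogeneous_zonal d z k), eval_zonal,
    map_zero, add_zero, smul_eq_mul, real_inner_comm y z, mul_comm (‖y‖ ^ 2), mul_assoc]

end Zonal

open scoped Nat in
theorem isPositiveKernel_gegenbauer_inner {d : ℕ} (hd : 0 < d) {E : Type*}
    [NormedAddCommGroup E] [InnerProductSpace ℝ E] (hE : Module.finrank ℝ E = d + 2)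
    {ι : Type*} (s : Finset ι) (y : ι → E) (k : ℕ) :
    IsPositiveKernel s fun i j =>
      gegenbauer d (-1) (inner ℝ (y i) (y j)) (‖y i‖ ^ 2 * ‖y j‖ ^ 2) k := by
  intro c
  have : FiniteDimensional ℝ E := .of_finrank_pos (by lia)
  let e := (stdOrthonormalBasis ℝ E).repr
  let V := ∑ i ∈ s, c i • zonal d (e (y i)) k
  have expand : fischer V V = (zonalLeadingCoeff d k * k ! : ℝ) * ∑ i ∈ s, ∑ j ∈ s,
      c i * c j * gegenbauer d (-1) (inner ℝ (y i) (y j)) (‖y i‖ ^ 2 * ‖y j‖ ^ 2) k := by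
    simp only [V, map_sum, map_smul, LinearMap.sum_apply, LinearMap.smul_apply, smul_eq_mul,
      Finset.mul_sum, fischer_zonal d k ((Fintype.card_fin _).trans hE), e.inner_map_map,
      e.norm_map]
    refine Finset.sum_congr rfl fun i _ => Finset.sum_congr rfl fun j _ => ?_
    rw [real_inner_comm, mul_comm (‖y j‖ ^ 2)]
    ring
  have pos : (0 : ℝ) < zonalLeadingCoeff d k * k ! := by
    exact_mod_cast Nat.mul_pos (zonalLeadingCoeff_pos hd k) k.factorial_pos
  exact nonneg_of_mul_nonneg_right (expand ▸ fischer_self_nonneg V) pos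

end GegenbauerPositivity

section KernelsOfUnitVectors

variable {E : Type*} [NormedAddCommGroup E] [InnerProductSpace ℝ E] {s : Finset E} {d : ℕ}

theorem isPositiveKernel_twoPoint (hd : 0 < d) (hE : Module.finrank ℝ E = d + 2)
    (hs : ∀ y ∈ s, ‖y‖ = 1) (k : ℕ) (L : List ℕ) :
    IsPositiveKernel s fun y z => twoPoint d (-1) (pairOfCosine (inner ℝ y z)) k L := by
  induction L generalizing k with
  | nil => exact .zero
  | cons a L ih =>
    refine (((isPositiveKernel_gegenbauer_inner hd hE s id k).const_mul
      (a := a * 3 ^ L.length * 6 ^ k) (by positivity)).add (ih (k + 1))).congr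
      fun y hy z hz => ?_
    have hw : (4 * 3 ^ 2 : ℝ) = 6 ^ 2 * (‖y‖ ^ 2 * ‖z‖ ^ 2) := by
      rw [hs y hy, hs z hz]
      norm_num
    rw [twoPoint, total_pairOfCosine, cosine_pairOfCosine, hw, gegenbauer_mul, mul_assoc _ (6 ^ k)]
    rfl

theorem inner_sub_smul_sub_smul {x : E} (hx : ‖x‖ = 1) (y z : E) :
    inner ℝ (y - inner ℝ x y • x) (z - inner ℝ x z • x)
      = inner ℝ y z - inner ℝ x y * inner ℝ x z := by
  simp only [inner_sub_left, inner_sub_right, real_inner_smul_left, real_inner_smul_right,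
    real_inner_self_eq_norm_sq, hx, real_inner_comm x]
  ring

theorem norm_sub_smul_sq {x y : E} (hx : ‖x‖ = 1) (hy : ‖y‖ = 1) :
    ‖y - inner ℝ x y • x‖ ^ 2 = 1 - inner ℝ x y ^ 2 := by
  rw [← real_inner_self_eq_norm_sq, inner_sub_smul_sub_smul hx, real_inner_self_eq_norm_sq, hy]
  ring

theorem isPositiveKernel_gegenbauer_inner_sub_mul (hd : 0 < d) (hE : Module.finrank ℝ E = d + 3)
    {x : E} (hx : ‖x‖ = 1) (hs : ∀ y ∈ s, ‖y‖ = 1) (k : ℕ) :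
    IsPositiveKernel s fun y z => gegenbauer d (-1) (inner ℝ y z - inner ℝ x y * inner ℝ x z)
      ((1 - inner ℝ x y ^ 2) * (1 - inner ℝ x z ^ 2)) k := by
  have : Fact (Module.finrank ℝ E = d + 2 + 1) := ⟨hE⟩
  have hfin : Module.finrank ℝ (Submodule.span ℝ {x})ᗮ = d + 2 :=
    Submodule.finrank_orthogonal_span_singleton (norm_ne_zero_iff.mp (hx ▸ one_ne_zero))
  have hproj (y : E) :
      ((Submodule.span ℝ {x})ᗮ.orthogonalProjectionOnto y : E) = y - inner ℝ x y • x := by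
    rw [Submodule.orthogonalProjectionOnto_orthogonal]
    exact congrArg (y - ·) (Submodule.starProjection_unit_singleton ℝ hx y)
  refine (isPositiveKernel_gegenbauer_inner hd hfin s
    (Submodule.span ℝ {x})ᗮ.orthogonalProjectionOnto k).congr fun y hy z hz => ?_
  rw [Submodule.coe_inner, Submodule.coe_norm, Submodule.coe_norm, hproj, hproj,
    inner_sub_smul_sub_smul hx, norm_sub_smul_sq hx (hs y hy), norm_sub_smul_sq hx (hs z hz)]

theorem isPositiveKernel_threePoint (hd : 0 < d) (hE : Module.finrank ℝ E = d + 3) {x : E}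
    (hx : ‖x‖ = 1) (hs : ∀ y ∈ s, ‖y‖ = 1) (k : ℕ) (D : List (ℕ × List (List ℤ))) :
    IsPositiveKernel s fun y z => threePoint d (-1) (pairOfCosine (inner ℝ x y))
      (pairOfCosine (inner ℝ x z)) (pairOfCosine (inner ℝ y z)) k D := by
  induction D generalizing k with
  | nil => exact .zero
  | cons e D ih =>
    obtain ⟨m, rows⟩ := e
    refine ((((isPositiveKernel_gegenbauer_inner_sub_mul hd hE hx hs k).gramKernel_mul (-1)
      (fun y => pairOfCosine (inner ℝ x y)) rows).const_mul
      (a := 2 ^ m * 3 ^ D.length * 108 ^ k) (by positivity)).add (ih (k + 1))).congr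
      fun y _ z _ => ?_
    rw [threePoint, total_pairOfCosine, projInner_pairOfCosine, projNormSq_pairOfCosine,
      gegenbauer_mul]
    ring

theorem gramDet_nonneg {x y z : E} (hx : ‖x‖ = 1) (hy : ‖y‖ = 1) (hz : ‖z‖ = 1) :
    0 ≤ 1 + 2 * inner ℝ x y * inner ℝ x z * inner ℝ y z
      - inner ℝ x y ^ 2 - inner ℝ x z ^ 2 - inner ℝ y z ^ 2 := by
  have cauchySchwarz := real_inner_mul_inner_self_le (y - inner ℝ x y • x) (z - inner ℝ x z • x)
  rw [real_inner_self_eq_norm_sq, real_inner_self_eq_norm_sq, norm_sub_smul_sq hx hy,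
    norm_sub_smul_sq hx hz, inner_sub_smul_sub_smul hx] at cauchySchwarz
  linarith

theorem inner_mem_Icc_of_one_le_dist {x y : E} (hx : ‖x‖ = 1) (hy : ‖y‖ = 1) (h : 1 ≤ dist x y) :
    inner ℝ x y ∈ Set.Icc (-1 : ℝ) (1 / 2) := by
  have lower := neg_le_of_abs_le (abs_real_inner_le_norm x y)
  have hsq := norm_sub_sq_real x y
  rw [hx, hy] at lower hsq
  rw [dist_eq_norm] at h
  constructor <;> nlinarith

end KernelsOfUnitVectors

/-! ### Counting -/

section Counting

variable {ι : Type*} {s : Finset ι}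

theorem sum_sum_eq_add_sum_erase [DecidableEq ι] {x : ι} (hx : x ∈ s) (F : ι → ι → ℝ) :
    ∑ y ∈ s, ∑ z ∈ s, F y z = F x x + ∑ y ∈ s.erase x,
      (F x y + F y x + F y y + ∑ z ∈ (s.erase x).erase y, F y z) := by
  have row (y : ι) : ∑ z ∈ s, F y z = F y x + ∑ z ∈ s.erase x, F y z :=
    (Finset.add_sum_erase s (F y) hx).symm
  have rowErase (y : ι) (hy : y ∈ s.erase x) :
      ∑ z ∈ s.erase x, F y z = F y y + ∑ z ∈ (s.erase x).erase y, F y z :=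
    (Finset.add_sum_erase _ (F y) hy).symm
  rw [← Finset.add_sum_erase s _ hx, row x, add_assoc, ← Finset.sum_add_distrib]
  congr 1
  refine Finset.sum_congr rfl fun y hy => ?_
  rw [row y, rowErase y hy]
  ring

theorem card_mul_nonneg_of_three_point_bounds {U : ι → ι → ι → ℝ} {P : ι → ι → ℝ} {a b m : ℝ}
    (hU : 0 ≤ ∑ x ∈ s, ∑ y ∈ s, ∑ z ∈ s, U x y z) (hP : 0 ≤ ∑ x ∈ s, ∑ y ∈ s, P x y)
    (hdiag : ∀ x ∈ s, U x x x + P x x ≤ a)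
    (hpair : ∀ x ∈ s, ∀ y ∈ s, x ≠ y → U x x y + U x y x + U x y y + P x y ≤ b)
    (htriple : ∀ x ∈ s, ∀ y ∈ s, ∀ z ∈ s, x ≠ y → x ≠ z → y ≠ z → U x y z ≤ m) :
    0 ≤ (s.card : ℝ) * (a + (s.card - 1) * (b + (s.card - 2) * m)) := by
  classical
  have third {x y : ι} (hx : x ∈ s) (hy : y ∈ s.erase x) :
      ∑ z ∈ (s.erase x).erase y, U x y z ≤ (s.card - 2) * m := by
    refine (Finset.sum_le_card_nsmul _ _ m fun z hz => ?_).trans_eq ?_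
    · simp only [Finset.mem_erase] at hy hz
      exact htriple x hx y hy.2 z hz.2.2 hy.1.symm hz.2.1.symm hz.1.symm
    · rw [nsmul_eq_mul, Finset.cast_card_erase_of_mem hy, Finset.cast_card_erase_of_mem hx]
      ring
  have first (x : ι) (hx : x ∈ s) : ∑ y ∈ s, ∑ z ∈ s, U x y z + ∑ y ∈ s, P x y
      ≤ a + (s.card - 1) * (b + (s.card - 2) * m) := by
    rw [sum_sum_eq_add_sum_erase hx, ← Finset.add_sum_erase s _ hx, add_add_add_comm,
      ← Finset.sum_add_distrib, ← Finset.cast_card_erase_of_mem hx, ← nsmul_eq_mul]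
    refine add_le_add (hdiag x hx) (Finset.sum_le_card_nsmul _ _ _ fun y hy => ?_)
    have hy' := Finset.mem_erase.mp hy
    linarith [hpair x hx y hy'.2 hy'.1.symm, third hx hy]
  rw [← nsmul_eq_mul]
  refine le_trans ?_ (Finset.sum_le_card_nsmul s _ _ first)
  rw [Finset.sum_add_distrib]
  exact add_nonneg hU hP

end Counting

section KissingConfigurations

/-- The sum of the three-point kernel over the choices of the first of three points, as a function
of their cosines. -/
noncomputable def tripleKernelSum (u v t : ℝ) : ℝ :=
  tripleKernel u v t + tripleKernel u t v + tripleKernel v t u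

variable {E : Type*} [NormedAddCommGroup E] [InnerProductSpace ℝ E] {s : Finset E}

theorem sum_tripleKernelSum_nonneg (hE : Module.finrank ℝ E = 14) (hs : ∀ x ∈ s, ‖x‖ = 1) :
    0 ≤ ∑ x ∈ s, ∑ y ∈ s, ∑ z ∈ s,
      tripleKernelSum (inner ℝ x y) (inner ℝ x z) (inner ℝ y z) := by
  have nonneg : 0 ≤ ∑ x ∈ s, ∑ y ∈ s, ∑ z ∈ s,
      tripleKernel (inner ℝ x y) (inner ℝ x z) (inner ℝ y z) :=
    Finset.sum_nonneg fun x hx =>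
      (isPositiveKernel_threePoint (by simp) hE (hs x hx) hs 0 kernelFactors).sum_nonneg
  have second : ∑ x ∈ s, ∑ y ∈ s, ∑ z ∈ s,
      tripleKernel (inner ℝ x y) (inner ℝ y z) (inner ℝ x z) =
        ∑ x ∈ s, ∑ y ∈ s, ∑ z ∈ s, tripleKernel (inner ℝ x y) (inner ℝ x z) (inner ℝ y z) := by
    rw [Finset.sum_comm]
    simp only [real_inner_comm]
  have third : ∑ x ∈ s, ∑ y ∈ s, ∑ z ∈ s,
      tripleKernel (inner ℝ x z) (inner ℝ y z) (inner ℝ x y) =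
        ∑ x ∈ s, ∑ y ∈ s, ∑ z ∈ s, tripleKernel (inner ℝ x y) (inner ℝ x z) (inner ℝ y z) := by
    rw [Finset.sum_congr rfl fun x _ => Finset.sum_comm, Finset.sum_comm]
    simp only [real_inner_comm]
  simp only [tripleKernelSum, Finset.sum_add_distrib]
  linarith

theorem sum_pairKernel_nonneg (hE : Module.finrank ℝ E = 14) (hs : ∀ x ∈ s, ‖x‖ = 1) :
    0 ≤ ∑ x ∈ s, ∑ y ∈ s, pairKernel (inner ℝ x y) :=
  (isPositiveKernel_twoPoint (by simp) hE hs 0 twoPointCoeffs).sum_nonneg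

theorem card_mul_nonneg (hE : Module.finrank ℝ E = 14) (hs : ∀ x ∈ s, ‖x‖ = 1)
    (hdist : ∀ x ∈ s, ∀ y ∈ s, x ≠ y → 1 ≤ dist x y) :
    0 ≤ (s.card : ℝ) * (3 * (tripleKernel 1 1 1 + pairKernel 1)
      + (s.card - 1) * (3 * (pairBound * 3 ^ 16) + (s.card - 2) * -(tripleMargin * 3 ^ 48))) := by
  have self (x) (hx : x ∈ s) : inner ℝ x x = (1 : ℝ) := by
    rw [real_inner_self_eq_norm_sq, hs x hx, one_pow]
  have cosine_mem (x) (hx : x ∈ s) (y) (hy : y ∈ s) (hxy : x ≠ y) :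
      inner ℝ x y ∈ Set.Icc (-1 : ℝ) (1 / 2) :=
    inner_mem_Icc_of_one_le_dist (hs x hx) (hs y hy) (hdist x hx y hy hxy)
  refine card_mul_nonneg_of_three_point_bounds (sum_tripleKernelSum_nonneg hE hs)
    (P := fun x y => 3 * pairKernel (inner ℝ x y)) ?_ (fun x hx => ?_) (fun x hx y hy hxy => ?_)
    fun x hx y hy z hz hxy hxz hyz => ?_
  · simpa only [← Finset.mul_sum] using mul_nonneg zero_le_three (sum_pairKernel_nonneg hE hs)
  · rw [self x hx, tripleKernelSum]
    linarith
  · have bound := tripleKernel_add_pairKernel_le (cosine_mem x hx y hy hxy)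
    simp only [self x hx, self y hy, real_inner_comm x y, tripleKernelSum]
    linarith [tripleKernel_comm (inner ℝ x y) 1 (inner ℝ x y)]
  · exact tripleKernel_add_le (cosine_mem x hx y hy hxy) (cosine_mem x hx z hz hxz)
      (cosine_mem y hy z hz hyz) (gramDet_nonneg (hs x hx) (hs y hy) (hs z hz))

end KissingConfigurations

section Diagonal

theorem tripleKernel_one : tripleKernel 1 1 1
    = (threePoint 11 (-1) (-1, 4) (-1, 4) (-1, 4) 0 kernelFactors : ℤ) := by
  rw [← eq_intCast (Int.castRingHom ℝ), map_threePoint, tripleKernel, pairOfCosine_one]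
  simp

theorem pairKernel_one : pairKernel 1 = (twoPoint 12 (-1) (-1, 4) 0 twoPointCoeffs : ℤ) := by
  rw [← eq_intCast (Int.castRingHom ℝ), map_twoPoint, pairKernel, pairOfCosine_one]
  simp

theorem diagonal_add_lt : 3 * (tripleKernel 1 1 1 + pairKernel 1)
    + (3184 - 1) * (3 * (pairBound * 3 ^ 16) + (3184 - 2) * -(tripleMargin * 3 ^ 48)) < 0 := by
  have integral : 3 * (threePoint 11 (-1) (-1, 4) (-1, 4) (-1, 4) 0 kernelFactors
      + twoPoint 12 (-1) (-1, 4) 0 twoPointCoeffs)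
      + (3184 - 1) * (3 * (pairBound * 3 ^ 16) + (3184 - 2) * -(tripleMargin * 3 ^ 48))
        < (0 : ℤ) := by
    decide +kernel
  rw [tripleKernel_one, pairKernel_one]
  exact_mod_cast integral

end Diagonal

end KissingBound

theorem kissing_number_dim14_le_3183_general {E : Type*} [NormedAddCommGroup E]
    [InnerProductSpace ℝ E] (hE : Module.finrank ℝ E = 14) (S : Finset E)
    (hnorm : ∀ x ∈ S, ‖x‖ = 1) (hdist : ∀ x ∈ S, ∀ y ∈ S, x ≠ y → 1 ≤ dist x y) :
    S.card ≤ 3183 := by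
  by_contra! hS
  obtain ⟨s, hsS, hcard⟩ := Finset.exists_subset_card_eq (show 3184 ≤ S.card from hS)
  have nonneg := KissingBound.card_mul_nonneg hE (fun x hx => hnorm x (hsS hx))
    fun x hx y hy => hdist x (hsS hx) y (hsS hy)
  rw [hcard, Nat.cast_ofNat] at nonneg
  exact (nonneg_of_mul_nonneg_right nonneg (by simp)).not_gt KissingBound.diagonal_add_lt

theorem kissing_number_dim14_le_3183
    (S : Finset (EuclideanSpace ℝ (Fin 14)))
    (hnorm : ∀ x ∈ S, ‖x‖ = 1)
    (hdist : ∀ x ∈ S, ∀ y ∈ S, x ≠ y → 1 ≤ dist x y) :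
    S.card ≤ 3183 :=
  kissing_number_dim14_le_3183_general finrank_euclideanSpace_fin S hnorm hdist
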